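/- Let ℓ ∈ {1, 2, 3} and let R ∈ ℤ[T] with deg(R) = 3. Then the number δ_ℓ(R(ξ)) := lim_{i→∞} {x_{ℓ+6i,0}·R(ξ)} (this limit exists) is transcendental over ℚ. Moreover there exist constants c₄, c₅ > 0 (depending only on ξ, the sequence (x_k), and R) such that the inequality |δ_ℓ(R(ξ)) − α| ≤ c₄·H(α)^(−γ−2) has infinitely many solutions α ∈ ℚ, while the inequality |δ_ℓ(R(ξ)) − α| ≤ c₅·H(α)^(−γ−2) has no solution α ∈ ℚ. -/

import Mathlib

open Polynomial Filter

noncomputable def gold : ℝ := (1 + Real.sqrt 5) / 2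

def Mmat (k : ℕ) : Matrix (Fin 2) (Fin 2) ℤ := !![3, (-1)^k; (-1)^(k+1), 0]

noncomputable def Xnorm (x : ℕ → Matrix (Fin 2) (Fin 2) ℤ) (k : ℕ) : ℝ :=
  max |(x k 0 0 : ℝ)| (max |(x k 0 1 : ℝ)| |(x k 1 1 : ℝ)|)

def MarkoffSeq (ξ : ℝ) (x : ℕ → Matrix (Fin 2) (Fin 2) ℤ) : Prop :=
  (∀ k, 1 ≤ k → x k 0 1 = x k 1 0) ∧
  (∀ k, 1 ≤ k → (x k).det = 1) ∧
  ∃ c₁ c₂ c₃ : ℝ, 0 < c₁ ∧ 0 < c₂ ∧ 0 < c₃ ∧ ∀ k, 1 ≤ k →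
    (c₁ * Xnorm x k ^ gold ≤ Xnorm x (k+1) ∧ Xnorm x (k+1) ≤ c₂ * Xnorm x k ^ gold) ∧
    (|(x k 0 0 : ℝ) * ξ - (x k 0 1 : ℝ)| ≤ c₃ / Xnorm x k ∧
     |(x k 0 1 : ℝ) * ξ - (x k 1 1 : ℝ)| ≤ c₃ / Xnorm x k) ∧
    (x (k+2) = x (k+1) * Mmat (k+1) * x k ∧ x (k+2) = x k * Mmat k * x (k+1)) ∧
    (Xnorm x k < Xnorm x (k+1) ∧ Xnorm x k < (1 + ξ^2) * |(x k 0 0 : ℝ)|)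

def polyNorm (P : Polynomial ℤ) : ℕ := P.support.sup fun i => (P.coeff i).natAbs

noncomputable def distInt (η : ℝ) : ℝ := |η - round η|

noncomputable def ratHeight (α : ℚ) : ℝ := max |(α.num : ℝ)| (α.den : ℝ)

def IsMinIntPoly (α : ℂ) (P : Polynomial ℤ) : Prop :=
  P ≠ 0 ∧ Polynomial.aeval α P = 0 ∧ P.content = 1 ∧ 0 < P.leadingCoeff ∧
  ∀ Q : Polynomial ℤ, Q ≠ 0 → Polynomial.aeval α Q = 0 → P.degree ≤ Q.degree

noncomputable def Qpoly (x : ℕ → Matrix (Fin 2) (Fin 2) ℤ) (k : ℕ) : Polynomial ℤ :=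
  Polynomial.C (x k 0 1 * x (k+1) 1 1 - x k 1 1 * x (k+1) 0 1)
  - Polynomial.C (x k 0 0 * x (k+1) 1 1 - x k 1 1 * x (k+1) 0 0) * Polynomial.X
  + Polynomial.C (x k 0 0 * x (k+1) 0 1 - x k 0 1 * x (k+1) 0 0) * Polynomial.X ^ 2

open Asymptotics Topology

/-- Entrywise form of the algebraic conditions on a Markoff sequence of symmetric matrices
`((u k, v k), (v k, w k))`. -/
structure EntryRelations (u v w : ℕ → ℤ) : Prop where
  det : ∀ k, u k * w k - v k ^ 2 = 1
  u_left : ∀ k, u (k+2) = 3 * u (k+1) * u k - (-1)^k * (u (k+1) * v k - v (k+1) * u k)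
  v_left : ∀ k, v (k+2) = 3 * u (k+1) * v k - (-1)^k * (u (k+1) * w k - v (k+1) * v k)
  v_left' : ∀ k, v (k+2) = 3 * v (k+1) * u k - (-1)^k * (v (k+1) * v k - w (k+1) * u k)
  w_left : ∀ k, w (k+2) = 3 * v (k+1) * v k - (-1)^k * (v (k+1) * w k - w (k+1) * v k)

namespace EntryRelations

variable {u v w : ℕ → ℤ}

theorem succ_uv (h : EntryRelations u v w) (k : ℕ) :
    u (k+1) * v (k+2) - v (k+1) * u (k+2) = (-1)^k * u k := by
  linear_combination u (k+1) * h.v_left' k - v (k+1) * h.u_left k + (-1)^k * u k * h.det (k+1)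

theorem succ_uw (h : EntryRelations u v w) (k : ℕ) :
    u (k+1) * w (k+2) - v (k+1) * v (k+2) = (-1)^k * v k := by
  linear_combination u (k+1) * h.w_left k - v (k+1) * h.v_left k + (-1)^k * v k * h.det (k+1)

theorem succ_vw (h : EntryRelations u v w) (k : ℕ) :
    v (k+1) * w (k+2) - w (k+1) * v (k+2) = (-1)^k * w k - 3 * v k := by
  linear_combination v (k+1) * h.w_left k - w (k+1) * h.v_left k
    + ((-1)^k * w k - 3 * v k) * h.det (k+1)

theorem skip_uv (h : EntryRelations u v w) (k : ℕ) :
    u k * v (k+2) - v k * u (k+2) = -(-1)^k * u (k+1) := by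
  linear_combination u k * h.v_left k - v k * h.u_left k - (-1)^k * u (k+1) * h.det k

theorem skip_uw (h : EntryRelations u v w) (k : ℕ) :
    u k * w (k+2) - v k * v (k+2) = -(-1)^k * v (k+1) := by
  linear_combination u k * h.w_left k - v k * h.v_left' k - (-1)^k * v (k+1) * h.det k

theorem skip_vw (h : EntryRelations u v w) (k : ℕ) :
    v k * v (k+2) - w k * u (k+2) = -(-1)^k * v (k+1) - 3 * u (k+1) := by
  linear_combination v k * h.v_left k - w k * h.u_left k
    + (-(-1)^k * v (k+1) - 3 * u (k+1)) * h.det k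

theorem rec_u (h : EntryRelations u v w) (k : ℕ) : u (k+3) = 3 * u (k+1) * u (k+2) - u k := by
  have hs : ((-1 : ℤ)^k) ^ 2 = 1 := by rw [← pow_mul, mul_comm, pow_mul]; norm_num
  have := h.u_left (k+1)
  have e : ((-1 : ℤ))^(k+1) = -(-1)^k := by ring
  rw [e] at this
  linear_combination this - (-1)^k * h.succ_uv k - u k * hs

theorem rec_v (h : EntryRelations u v w) (k : ℕ) : v (k+3) = 3 * u (k+1) * v (k+2) - v k := by
  have hs : ((-1 : ℤ)^k) ^ 2 = 1 := by rw [← pow_mul, mul_comm, pow_mul]; norm_num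
  have := h.v_left' (k+1)
  have e : ((-1 : ℤ))^(k+1) = -(-1)^k := by ring
  rw [e] at this
  linear_combination this - (-1)^k * h.succ_uw k - v k * hs

theorem rec_w (h : EntryRelations u v w) (k : ℕ) : w (k+3) = 3 * u (k+1) * w (k+2) - w k := by
  have hs : ((-1 : ℤ)^k) ^ 2 = 1 := by rw [← pow_mul, mul_comm, pow_mul]; norm_num
  have := h.w_left (k+1)
  have e : ((-1 : ℤ))^(k+1) = -(-1)^k := by ring
  rw [e] at this
  linear_combination this - (-1)^k * h.succ_vw k - w k * hs - 3 * h.succ_uw k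

theorem markoff (h : EntryRelations u v w) (k : ℕ) :
    u k ^ 2 + u (k+1) ^ 2 + u (k+2) ^ 2 = 3 * u k * u (k+1) * u (k+2) := by
  have hs : ((-1 : ℤ)^k) ^ 2 = 1 := by rw [← pow_mul, mul_comm, pow_mul]; norm_num
  linear_combination u (k+2) * h.u_left k - (-1)^k * u k * h.succ_uv k
    + (-1)^k * u (k+1) * h.skip_uv k - (u k ^ 2 + u (k+1) ^ 2) * hs

/-- The numerators `EntryRelations.numer` at indices `k` and `k+3` are linked modulo
`u (k+2) * u (k+5)`. -/
theorem numerator_rec (h : EntryRelations u v w) (k : ℕ) :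
    (w (k+3) * v (k+5) - (-1)^k * w (k+4) + 6 * v (k+4) - 9 * (-1)^k * u (k+4)) * u (k+2)
      + (w k * v (k+2) + (-1)^k * w (k+1) + 6 * v (k+1) + 9 * (-1)^k * u (k+1)) * u (k+5)
      + 6 * (-1)^k * u (k+3)
      = 3 * (v (k+1) * w (k+2) + (-1)^k * w k) * (u (k+2) * u (k+5)) := by
  have hs : ((-1 : ℤ)^k) ^ 2 = 1 := by rw [← pow_mul, mul_comm, pow_mul]; norm_num
  have e1 : ((-1 : ℤ))^(k+1) = -(-1)^k := by ring
  have e2 : ((-1 : ℤ))^(k+2) = (-1)^k := by ring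
  have a1 := h.skip_uv (k+2)
  have a2 := h.skip_uw (k+1)
  have a3 := h.skip_vw (k+1)
  rw [e1] at a2 a3
  rw [e2] at a1
  have Y : 3 * (v (k+1) * w (k+2) + (-1)^k * w k) * u (k+2)
      - (w k * v (k+2) + (-1)^k * w (k+1) + 6 * v (k+1) + 9 * (-1)^k * u (k+1))
      = w (k+3) * v (k+2) - (-1)^k * w (k+1) := by
    linear_combination - v (k+2) * h.rec_w k + 3 * v (k+1) * h.det (k+2) - 3 * v (k+2) * h.succ_uw k
      - 3 * (-1)^k * h.skip_vw k + 3 * v (k+1) * hs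
  have V : u (k+1) * u (k+4) = u (k+2) ^ 2 + u (k+3) ^ 2 := by
    have := h.rec_u (k+1)
    linear_combination u (k+1) * this - h.markoff (k+1)
  have W := h.rec_w (k+1)
  have U := h.rec_u (k+2)
  have Vr := h.rec_v (k+2)
  have key : u (k+3) * w (k+1) - u (k+1) * w (k+3) = - 2 * (-1)^k * v (k+2) + 3 * u (k+2) := by
    linear_combination - a2 - a3
  linear_combination (-u (k+5)) * Y + u (k+2) * w (k+3) * Vr
    + ((-1)^k * w (k+1) - w (k+3) * v (k+2)) * U + (3 * u (k+3) * w (k+3) + 6) * a1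
    - (-1)^k * u (k+2) * W + 3 * (-1)^k * w (k+3) * V + 3 * (-1)^k * u (k+4) * key
    - 6 * v (k+2) * u (k+4) * hs

end EntryRelations

theorem gold_sq : gold ^ 2 = gold + 1 := by
  have h : Real.sqrt 5 ^ 2 = 5 := Real.sq_sqrt (by norm_num)
  unfold gold
  linear_combination h / 4

theorem one_lt_gold : 1 < gold := Real.one_lt_goldenRatio

theorem gold_lt_two : gold < 2 := Real.goldenRatio_lt_two

theorem gold_irrational : Irrational gold := Real.goldenRatio_irrational

/-- An integer sequence whose consecutive triples satisfy the Markoff equation, and whose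
absolute values grow to infinity like iterated powers with exponent the golden ratio. -/
structure MarkoffGrowth (u : ℕ → ℤ) : Prop where
  ne_zero : ∀ n, u n ≠ 0
  markoff : ∀ n, u n ^ 2 + u (n+1) ^ 2 + u (n+2) ^ 2 = 3 * u n * u (n+1) * u (n+2)
  tendsto_abs : Tendsto (fun n => |(u n : ℝ)|) atTop atTop
  growth : ∃ c C : ℝ, 0 < c ∧ 0 < C ∧ ∀ n,
    c * |(u n : ℝ)| ^ gold ≤ |(u (n+1) : ℝ)| ∧ |(u (n+1) : ℝ)| ≤ C * |(u n : ℝ)| ^ gold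

/-- The sequence of inverses of an integer sequence. -/
noncomputable def invSeq (u : ℕ → ℤ) (n : ℕ) : ℝ := (u n : ℝ)⁻¹

/-- Evaluation of a polynomial in two variables at consecutive inverses. -/
noncomputable def evInv (u : ℕ → ℤ) : MvPolynomial (Fin 2) ℚ →ₐ[ℚ] (ℕ → ℝ) :=
  MvPolynomial.aeval ![invSeq u, fun n => invSeq u (n+1)]

/-- The monomial `i, j` in consecutive inverses. -/
noncomputable def monInv (u : ℕ → ℤ) (i j : ℕ) (n : ℕ) : ℝ :=
  invSeq u n ^ i * invSeq u (n+1) ^ j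

namespace MarkoffGrowth

variable {u : ℕ → ℤ}

theorem cast_ne (h : MarkoffGrowth u) (n : ℕ) : (u n : ℝ) ≠ 0 := Int.cast_ne_zero.2 (h.ne_zero n)

theorem one_le_abs (h : MarkoffGrowth u) (n : ℕ) : 1 ≤ |(u n : ℝ)| := by
  exact_mod_cast Int.one_le_abs (h.ne_zero n)

theorem abs_pos (h : MarkoffGrowth u) (n : ℕ) : 0 < |(u n : ℝ)| :=
  lt_of_lt_of_le one_pos (h.one_le_abs n)

theorem inv_ne (h : MarkoffGrowth u) (n : ℕ) : invSeq u n ≠ 0 := inv_ne_zero (h.cast_ne n)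

theorem abs_inv_pos (h : MarkoffGrowth u) (n : ℕ) : 0 < |invSeq u n| :=
  _root_.abs_pos.2 (h.inv_ne n)

theorem tendsto_abs_inv (h : MarkoffGrowth u) : Tendsto (fun n => |invSeq u n|) atTop (𝓝 0) := by
  refine h.tendsto_abs.inv_tendsto_atTop.congr fun n => ?_
  rw [invSeq, abs_inv, Pi.inv_apply]

theorem inv_succ_isTheta (h : MarkoffGrowth u) :
    (fun n => invSeq u (n+1)) =Θ[atTop] fun n => |invSeq u n| ^ gold := by
  obtain ⟨c, C, hc, hC, hcC⟩ := h.growth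
  have e : ∀ n, |invSeq u n| ^ gold = (|(u n : ℝ)| ^ gold)⁻¹ := fun n => by
    rw [invSeq, abs_inv, Real.inv_rpow (abs_nonneg _)]
  have hp : ∀ n, 0 < |(u n : ℝ)| ^ gold := fun n => Real.rpow_pos_of_pos (h.abs_pos n) _
  constructor
  · refine IsBigO.of_bound c⁻¹ (Eventually.of_forall fun n => ?_)
    rw [e, Real.norm_eq_abs, Real.norm_eq_abs, invSeq, abs_inv, abs_of_pos (inv_pos.2 (hp n)),
      ← mul_inv]
    exact inv_anti₀ (mul_pos hc (hp n)) (hcC n).1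
  · refine IsBigO.of_bound C (Eventually.of_forall fun n => ?_)
    rw [e, Real.norm_eq_abs, Real.norm_eq_abs, abs_of_pos (inv_pos.2 (hp n)), invSeq, abs_inv,
      ← div_eq_mul_inv, inv_eq_one_div, div_le_div_iff₀ (hp n) (h.abs_pos _), one_mul]
    exact (hcC n).2

theorem monInv_isTheta (h : MarkoffGrowth u) (i j : ℕ) :
    monInv u i j =Θ[atTop] fun n => |invSeq u n| ^ ((i : ℝ) + gold * j) := by
  have h1 : (fun n => invSeq u n ^ i) =Θ[atTop] fun n => |invSeq u n| ^ i := by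
    simpa using ((isTheta_refl (fun n => invSeq u n) atTop).norm_right).pow i
  have := h1.mul (h.inv_succ_isTheta.pow j)
  refine this.trans_eventuallyEq (Eventually.of_forall fun n => ?_)
  simp only
  rw [Real.rpow_add (h.abs_inv_pos n), Real.rpow_natCast, Real.rpow_mul (abs_nonneg _),
    Real.rpow_natCast]

theorem rpow_isLittleO (h : MarkoffGrowth u) {a b : ℝ} (hab : a < b) :
    (fun n => |invSeq u n| ^ b) =o[atTop] fun n => |invSeq u n| ^ a := by
  rw [isLittleO_iff_tendsto' (Eventually.of_forall fun n hn =>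
    absurd hn (Real.rpow_pos_of_pos (h.abs_inv_pos n) _).ne')]
  have h2 : Tendsto (fun n => |invSeq u n| ^ (b - a)) atTop (𝓝 0) := by
    have := h.tendsto_abs_inv.rpow_const (p := b - a) (Or.inr (by linarith))
    rwa [Real.zero_rpow (by linarith)] at this
  refine h2.congr fun n => ?_
  rw [Real.rpow_sub (h.abs_inv_pos n)]

theorem rpow_isBigO (h : MarkoffGrowth u) {a b : ℝ} (hab : a ≤ b) :
    (fun n => |invSeq u n| ^ b) =O[atTop] fun n => |invSeq u n| ^ a := by
  rcases hab.eq_or_lt with rfl | hab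
  · exact isBigO_refl _ _
  · exact (h.rpow_isLittleO hab).isBigO

theorem pow_isTheta (u : ℕ → ℤ) (M : ℕ) :
    (fun n => invSeq u n ^ M) =Θ[atTop] fun n => |invSeq u n| ^ (M : ℝ) := by
  simpa using ((isTheta_refl (fun n => invSeq u n) atTop).norm_right).pow M

theorem monInv_isLittleO (h : MarkoffGrowth u) {i j i' j' : ℕ}
    (hw : (i : ℝ) + gold * j < i' + gold * j') : monInv u i' j' =o[atTop] monInv u i j :=
  ((h.monInv_isTheta i' j').isBigO.trans_isLittleO (h.rpow_isLittleO hw)).trans_isTheta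
    (h.monInv_isTheta i j).symm

theorem monInv_isBigO_pow (h : MarkoffGrowth u) {i j M : ℕ}
    (hw : (M : ℝ) ≤ i + gold * j) : monInv u i j =O[atTop] fun n => invSeq u n ^ M :=
  ((h.monInv_isTheta i j).isBigO.trans (h.rpow_isBigO hw)).trans_isTheta (pow_isTheta u M).symm

theorem pow_isLittleO_monInv (h : MarkoffGrowth u) {i j M : ℕ}
    (hw : (i : ℝ) + gold * j < M) : (fun n => invSeq u n ^ M) =o[atTop] monInv u i j :=
  ((pow_isTheta u M).isBigO.trans_isLittleO (h.rpow_isLittleO hw)).trans_isTheta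
    (h.monInv_isTheta i j).symm

theorem pow_isBigO_pow (h : MarkoffGrowth u) {M N : ℕ} (hMN : M ≤ N) :
    (fun n => invSeq u n ^ N) =O[atTop] fun n => invSeq u n ^ M :=
  ((pow_isTheta u N).isBigO.trans (h.rpow_isBigO (by exact_mod_cast hMN))).trans_isTheta
    (pow_isTheta u M).symm

theorem monInv_ne (h : MarkoffGrowth u) (i j n : ℕ) : monInv u i j n ≠ 0 :=
  mul_ne_zero (pow_ne_zero _ (h.inv_ne _)) (pow_ne_zero _ (h.inv_ne _))

end MarkoffGrowth

theorem weight_injective {i j i' j' : ℕ} (h : (i : ℝ) + gold * j = i' + gold * j') :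
    i = i' ∧ j = j' := by
  by_cases hj : j = j'
  · subst hj
    exact ⟨by exact_mod_cast add_right_cancel h, rfl⟩
  · exfalso
    have hne : ((j : ℝ) - j') ≠ 0 := sub_ne_zero.2 (by exact_mod_cast hj)
    refine gold_irrational ⟨((i' : ℚ) - i) / (j - j'), ?_⟩
    push_cast
    rw [div_eq_iff hne]
    linear_combination -h

theorem evInv_apply (u : ℕ → ℤ) (q : MvPolynomial (Fin 2) ℚ) (n : ℕ) :
    evInv u q n = ∑ m ∈ q.support, ((q.coeff m : ℚ) : ℝ) * monInv u (m 0) (m 1) n := by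
  rw [evInv, MvPolynomial.aeval_def, MvPolynomial.eval₂_eq']
  simp [Finset.sum_apply, Fin.prod_univ_two, monInv, Pi.algebraMap_apply]

namespace MarkoffGrowth

variable {u : ℕ → ℤ}

theorem evInv_dominant (h : MarkoffGrowth u) {q : MvPolynomial (Fin 2) ℚ} (hq : q ≠ 0) :
    ∃ m ∈ q.support, (fun n => evInv u q n - ((q.coeff m : ℚ) : ℝ) * monInv u (m 0) (m 1) n)
      =o[atTop] monInv u (m 0) (m 1) := by
  obtain ⟨m, hm, hmin⟩ := Finset.exists_min_image q.support
    (fun m => ((m 0 : ℕ) : ℝ) + gold * (m 1 : ℕ)) (MvPolynomial.support_nonempty.2 hq)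
  refine ⟨m, hm, ?_⟩
  have e : (fun n => evInv u q n - ((q.coeff m : ℚ) : ℝ) * monInv u (m 0) (m 1) n)
      = fun n => ∑ k ∈ q.support.erase m, ((q.coeff k : ℚ) : ℝ) * monInv u (k 0) (k 1) n := by
    funext n
    rw [evInv_apply, ← Finset.add_sum_erase _ _ hm, add_sub_cancel_left]
  rw [e]
  refine IsLittleO.fun_sum fun k hk => IsLittleO.const_mul_left (h.monInv_isLittleO ?_) _
  obtain ⟨hkm, hk⟩ := Finset.mem_erase.1 hk
  refine lt_of_le_of_ne (hmin k hk) fun hw => hkm ?_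
  obtain ⟨h0, h1⟩ := weight_injective hw
  ext i
  fin_cases i
  · exact h0.symm
  · exact h1.symm

theorem evInv_isBigO_pow (h : MarkoffGrowth u) {q : MvPolynomial (Fin 2) ℚ} {M : ℕ}
    (hq : ∀ m ∈ q.support, M ≤ m 0 ∨ M ≤ m 1) :
    evInv u q =O[atTop] fun n => invSeq u n ^ M := by
  have e : evInv u q
      = fun n => ∑ k ∈ q.support, ((q.coeff k : ℚ) : ℝ) * monInv u (k 0) (k 1) n := by
    funext n
    rw [evInv_apply]
  rw [e]
  refine IsBigO.fun_sum fun k hk => IsBigO.const_mul_left (h.monInv_isBigO_pow ?_) _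
  have h1 := one_lt_gold
  have hk0 : (0 : ℝ) ≤ (k 0 : ℕ) := Nat.cast_nonneg _
  have hk1 : (0 : ℝ) ≤ (k 1 : ℕ) := Nat.cast_nonneg _
  rcases hq k hk with hk | hk
  · have : (M : ℝ) ≤ (k 0 : ℕ) := by exact_mod_cast hk
    nlinarith
  · have : (M : ℝ) ≤ (k 1 : ℕ) := by exact_mod_cast hk
    nlinarith

theorem evInv_bounded (h : MarkoffGrowth u) (q : MvPolynomial (Fin 2) ℚ) :
    evInv u q =O[atTop] fun _ => (1 : ℝ) := by
  simpa using h.evInv_isBigO_pow (q := q) (M := 0) (by simp)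

theorem pow_bounded (h : MarkoffGrowth u) (M : ℕ) :
    (fun n => invSeq u n ^ M) =O[atTop] fun _ => (1 : ℝ) := by
  simpa using h.pow_isBigO_pow (Nat.zero_le M)

/-- The algebra of real sequences admitting an asymptotic expansion as a power series in the
consecutive inverses of `u`. -/
noncomputable def expansions (h : MarkoffGrowth u) : Subalgebra ℚ (ℕ → ℝ) where
  carrier := {g | ∀ M : ℕ, ∃ q, (g - evInv u q) =O[atTop] fun n => invSeq u n ^ M}
  mul_mem' := by
    intro a b ha hb M
    obtain ⟨p, hp⟩ := ha M
    obtain ⟨q, hq⟩ := hb M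
    refine ⟨p * q, ?_⟩
    have e : a * b - evInv u (p * q)
        = (a - evInv u p) * (b - evInv u q) + (a - evInv u p) * evInv u q
          + evInv u p * (b - evInv u q) := by
      rw [map_mul]; ring
    rw [e]
    have h1 := hp.mul (hq.trans (h.pow_bounded M))
    have h2 := hp.mul (h.evInv_bounded q)
    have h3 := (h.evInv_bounded p).mul hq
    simp only [mul_one, one_mul] at h1 h2 h3
    exact (h1.add h2).add h3
  add_mem' := by
    intro a b ha hb M
    obtain ⟨p, hp⟩ := ha M
    obtain ⟨q, hq⟩ := hb M
    refine ⟨p + q, ?_⟩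
    rw [map_add, add_sub_add_comm]
    exact hp.add hq
  algebraMap_mem' := by
    intro r M
    refine ⟨algebraMap ℚ _ r, ?_⟩
    rw [AlgHom.commutes, sub_self]
    exact isBigO_zero _ _

theorem evInv_mem (h : MarkoffGrowth u) (q : MvPolynomial (Fin 2) ℚ) :
    evInv u q ∈ h.expansions := fun M => ⟨q, by rw [sub_self]; exact isBigO_zero _ _⟩

theorem inv_mem (h : MarkoffGrowth u) : invSeq u ∈ h.expansions := by
  simpa [evInv] using h.evInv_mem (MvPolynomial.X 0)

theorem inv_succ_mem (h : MarkoffGrowth u) : (fun n => invSeq u (n+1)) ∈ h.expansions := by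
  simpa [evInv] using h.evInv_mem (MvPolynomial.X 1)

theorem expansions_bounded (h : MarkoffGrowth u) {g : ℕ → ℝ} (hg : g ∈ h.expansions) :
    g =O[atTop] fun _ => (1 : ℝ) := by
  obtain ⟨q, hq⟩ := hg 0
  have := (hq.trans (h.pow_bounded 0)).add (h.evInv_bounded q)
  simpa using this

theorem mem_of_approx (h : MarkoffGrowth u) {g : ℕ → ℝ}
    (hg : ∀ M : ℕ, ∃ e ∈ h.expansions, (g - e) =O[atTop] fun n => invSeq u n ^ M) :
    g ∈ h.expansions := by
  intro M
  obtain ⟨e, he, hge⟩ := hg M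
  obtain ⟨q, hq⟩ := he M
  exact ⟨q, (hge.add hq).congr_left fun n => by simp⟩

theorem expansions_dominant (h : MarkoffGrowth u) {g : ℕ → ℝ} (hg : g ∈ h.expansions) :
    (∀ M : ℕ, g =O[atTop] fun n => invSeq u n ^ M) ∨ ∃ (i j : ℕ) (c : ℚ), c ≠ 0 ∧
      Tendsto (fun n => g n / monInv u i j n) atTop (𝓝 (c : ℝ)) := by
  by_cases hM : ∀ M : ℕ, g =O[atTop] fun n => invSeq u n ^ M
  · exact Or.inl hM
  right
  push Not at hM
  obtain ⟨M, hM⟩ := hM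
  obtain ⟨q, hq⟩ := hg M
  have hq0 : q ≠ 0 := by
    rintro rfl
    exact hM (by simpa using hq)
  obtain ⟨m, hm, hdom⟩ := h.evInv_dominant hq0
  have hw : ((m 0 : ℕ) : ℝ) + gold * (m 1 : ℕ) < M := by
    by_contra hw
    push Not at hw
    refine hM ?_
    have h1 := (hdom.isBigO.trans (h.monInv_isBigO_pow hw)).add
      ((h.monInv_isBigO_pow hw).const_mul_left ((q.coeff m : ℚ) : ℝ))
    have h2 := hq.add h1
    refine h2.congr_left fun n => ?_
    simp only [Pi.sub_apply]
    ring
  refine ⟨m 0, m 1, q.coeff m, MvPolynomial.mem_support_iff.1 hm, ?_⟩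
  have h1 := ((hq.trans_isLittleO (h.pow_isLittleO_monInv hw)).add hdom).tendsto_div_nhds_zero
  have h2 := h1.add_const (((q.coeff m : ℚ) : ℝ))
  rw [zero_add] at h2
  refine h2.congr fun n => ?_
  have := h.monInv_ne (m 0) (m 1) n
  simp only [Pi.sub_apply]
  field_simp
  ring

end MarkoffGrowth

/-- The increments `u (n+1) / (u n * u (n+3))`. -/
noncomputable def gapSeq (u : ℕ → ℤ) (n : ℕ) : ℝ := u (n+1) / (u n * u (n+3))

/-- The ratios `u n * u (n+1) / u (n+2)`. -/
noncomputable def ratioSeq (u : ℕ → ℤ) (n : ℕ) : ℝ := u n * u (n+1) / u (n+2)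

namespace MarkoffGrowth

variable {u : ℕ → ℤ}

theorem exists_mul_le (h : MarkoffGrowth u) :
    ∃ C : ℝ, 0 < C ∧ ∀ n, |(u n : ℝ)| * |(u (n+1) : ℝ)| ≤ C * |(u (n+2) : ℝ)| := by
  obtain ⟨c, C, hc, hC, hcC⟩ := h.growth
  refine ⟨(c ^ gold)⁻¹, inv_pos.2 (Real.rpow_pos_of_pos hc _), fun n => ?_⟩
  have hc' : 0 < c ^ gold := Real.rpow_pos_of_pos hc _
  rw [← div_eq_inv_mul, le_div_iff₀ hc']
  have h1 := one_lt_gold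
  have hA := h.abs_pos n
  have hB := h.abs_pos (n+1)
  calc |(u n : ℝ)| * |(u (n+1) : ℝ)| * c ^ gold
      = c * ((c * |(u n : ℝ)| ^ gold) ^ (gold - 1) * |(u (n+1) : ℝ)|) := by
        rw [Real.mul_rpow hc.le (Real.rpow_nonneg hA.le _), ← Real.rpow_mul hA.le,
          Real.rpow_sub hc, Real.rpow_one,
          show gold * (gold - 1) = 1 by linear_combination gold_sq, Real.rpow_one]
        field_simp
    _ ≤ c * (|(u (n+1) : ℝ)| ^ (gold - 1) * |(u (n+1) : ℝ)|) := by
        gcongr ?_ * (?_ * _)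
        exact Real.rpow_le_rpow (by positivity) (hcC n).1 (by linarith)
    _ = c * |(u (n+1) : ℝ)| ^ gold := by
        rw [Real.rpow_sub hB, Real.rpow_one]
        field_simp
    _ ≤ |(u (n+2) : ℝ)| := (hcC (n+1)).1

theorem ratioSeq_bounded (h : MarkoffGrowth u) : ratioSeq u =O[atTop] fun _ => (1 : ℝ) := by
  obtain ⟨C, hC, hCu⟩ := h.exists_mul_le
  refine IsBigO.of_bound C (Eventually.of_forall fun n => ?_)
  rw [ratioSeq, Real.norm_eq_abs, abs_div, abs_mul, div_le_iff₀ (h.abs_pos _)]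
  simpa using hCu n

theorem ratioSeq_eq (h : MarkoffGrowth u) (n : ℕ) : ratioSeq u n =
    (1 + ratioSeq u n ^ 2 * (invSeq u n ^ 2 + invSeq u (n+1) ^ 2)) / 3 := by
  have h0 := h.cast_ne n
  have h1 := h.cast_ne (n+1)
  have h2 := h.cast_ne (n+2)
  have hm : (u n : ℝ) ^ 2 + u (n+1) ^ 2 + u (n+2) ^ 2 = 3 * u n * u (n+1) * u (n+2) := by
    exact_mod_cast h.markoff n
  unfold ratioSeq invSeq
  field_simp
  linear_combination -hm

theorem inv_succ_isBigO (h : MarkoffGrowth u) :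
    (fun n => invSeq u (n+1)) =O[atTop] fun n => invSeq u n := by
  have hw : ((1 : ℕ) : ℝ) ≤ (0 : ℕ) + gold * (1 : ℕ) := by
    have := one_lt_gold
    norm_num
    linarith
  refine ((h.monInv_isBigO_pow hw).congr_left fun n => ?_).congr_right fun n => ?_
  · simp [monInv]
  · simp

theorem ratioSeq_mem (h : MarkoffGrowth u) : ratioSeq u ∈ h.expansions := by
  refine h.mem_of_approx fun M => ?_
  induction M with
  | zero => exact ⟨0, zero_mem _, by simpa using h.ratioSeq_bounded⟩
  | succ M ih =>
    obtain ⟨e, he, hM⟩ := ih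
    have hst : (fun n => invSeq u n ^ 2 + invSeq u (n+1) ^ 2) ∈ h.expansions :=
      add_mem (pow_mem h.inv_mem 2) (pow_mem h.inv_succ_mem 2)
    refine ⟨(3⁻¹ : ℚ) • (1 + e ^ 2 * (fun n => invSeq u n ^ 2 + invSeq u (n+1) ^ 2)),
      Subalgebra.smul_mem _ (add_mem (one_mem _) (mul_mem (pow_mem he 2) hst)) _, ?_⟩
    have hO : (fun n => invSeq u n ^ 2 + invSeq u (n+1) ^ 2) =O[atTop] fun n => invSeq u n := by
      have h2 : (fun n => invSeq u n ^ 2) =O[atTop] fun n => invSeq u n := by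
        simpa using h.pow_isBigO_pow (M := 1) (N := 2) (by norm_num)
      exact h2.add ((h.inv_succ_isBigO.pow 2).trans h2)
    have hb := h.ratioSeq_bounded.add (h.expansions_bounded he)
    have hall := ((hM.mul hb).mul hO).const_mul_left (3⁻¹ : ℝ)
    refine (hall.congr_left fun n => ?_).congr_right fun n => ?_
    · have := h.ratioSeq_eq n
      simp only [Pi.sub_apply, Pi.smul_apply, Pi.add_apply, Pi.mul_apply, Pi.pow_apply,
        Pi.one_apply, Rat.smul_def]
      push_cast
      linear_combination -this
    · ring

theorem inv_add_two_eq (h : MarkoffGrowth u) :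
    (fun n => invSeq u (n+2)) = invSeq u * (fun n => invSeq u (n+1)) * ratioSeq u := by
  funext n
  have h0 := h.cast_ne n
  have h1 := h.cast_ne (n+1)
  simp only [Pi.mul_apply, invSeq, ratioSeq]
  field_simp

theorem inv_add_two_mem (h : MarkoffGrowth u) : (fun n => invSeq u (n+2)) ∈ h.expansions := by
  rw [h.inv_add_two_eq]
  exact mul_mem (mul_mem h.inv_mem h.inv_succ_mem) h.ratioSeq_mem

theorem expansions_shift (h : MarkoffGrowth u) {g : ℕ → ℝ} (hg : g ∈ h.expansions) :
    (fun n => g (n+1)) ∈ h.expansions := by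
  refine h.mem_of_approx fun M => ?_
  obtain ⟨q, hq⟩ := hg M
  refine ⟨fun n => evInv u q (n+1), ?_, ?_⟩
  · clear hq
    induction q using MvPolynomial.induction_on with
    | C a =>
      have : (fun n => evInv u (MvPolynomial.C a) (n+1)) = algebraMap ℚ (ℕ → ℝ) a := by
        funext n
        simp [evInv]
      rw [this]
      exact algebraMap_mem _ a
    | add p q hp hq =>
      have := add_mem hp hq
      convert this using 1
      funext n
      simp
    | mul_X p i hp =>
      have hX : (fun n => evInv u (MvPolynomial.X i) (n+1)) ∈ h.expansions := by
        fin_cases i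
        · simpa [evInv] using h.inv_succ_mem
        · simpa [evInv] using h.inv_add_two_mem
      have := mul_mem hp hX
      convert this using 1
      funext n
      simp
  · have h1 := hq.comp_tendsto (tendsto_add_atTop_nat 1)
    exact h1.trans (h.inv_succ_isBigO.pow M)

theorem expansions_shift_three (h : MarkoffGrowth u) {g : ℕ → ℝ} (hg : g ∈ h.expansions) :
    (fun n => g (n+3)) ∈ h.expansions :=
  h.expansions_shift (h.expansions_shift (h.expansions_shift hg))

theorem inv_mul_shift_mem (h : MarkoffGrowth u) :
    (fun n => (u (n+2) : ℝ) * invSeq u n * invSeq u (n+1)) ∈ h.expansions := by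
  have hst : (fun n => invSeq u n ^ 2 + invSeq u (n+1) ^ 2) ∈ h.expansions :=
      add_mem (pow_mem h.inv_mem 2) (pow_mem h.inv_succ_mem 2)
  have := sub_mem (natCast_mem h.expansions 3) (mul_mem h.ratioSeq_mem hst)
  convert this using 1
  funext n
  have h0 := h.cast_ne n
  have h1 := h.cast_ne (n+1)
  have h2 := h.cast_ne (n+2)
  have hm : (u n : ℝ) ^ 2 + u (n+1) ^ 2 + u (n+2) ^ 2 = 3 * u n * u (n+1) * u (n+2) := by
    exact_mod_cast h.markoff n
  simp only [Pi.sub_apply, Pi.mul_apply, Pi.natCast_apply, ratioSeq, invSeq]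
  push_cast
  field_simp
  linear_combination hm

theorem gapSeq_eq (h : MarkoffGrowth u) :
    gapSeq u = invSeq u * (fun n => invSeq u (n+2)) * fun n => ratioSeq u (n+1) := by
  funext n
  have h0 := h.cast_ne n
  have h2 := h.cast_ne (n+2)
  have h3 := h.cast_ne (n+3)
  simp only [Pi.mul_apply, gapSeq, invSeq, ratioSeq]
  field_simp

theorem gapSeq_mem (h : MarkoffGrowth u) : gapSeq u ∈ h.expansions := by
  rw [h.gapSeq_eq]
  exact mul_mem (mul_mem h.inv_mem h.inv_add_two_mem) (h.expansions_shift h.ratioSeq_mem)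

theorem gapSeq_isBigO (h : MarkoffGrowth u) : gapSeq u =O[atTop] invSeq u := by
  rw [h.gapSeq_eq, mul_assoc]
  have := (isBigO_refl (invSeq u) atTop).mul (h.expansions_bounded
    (mul_mem h.inv_add_two_mem (h.expansions_shift h.ratioSeq_mem)))
  exact this.congr_right fun n => mul_one _

theorem inv_add_three_isBigO (h : MarkoffGrowth u) :
    (fun n => invSeq u (n+3)) =O[atTop] fun n => invSeq u n ^ 2 := by
  have h1 : (fun n => invSeq u (n+2)) =O[atTop] fun n => invSeq u n ^ 2 := by
    rw [h.inv_add_two_eq]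
    have := ((isBigO_refl (invSeq u) atTop).mul h.inv_succ_isBigO).mul h.ratioSeq_bounded
    exact this.congr_right fun n => by ring
  exact (h1.comp_tendsto (tendsto_add_atTop_nat 1)).trans (h.inv_succ_isBigO.pow 2)

theorem mem_of_gap_recurrence (h : MarkoffGrowth u) {f : ℕ → ℝ}
    (hf : ∀ n, f n = 6 * gapSeq u n + f (n+3)) (hfb : ∀ n, |f n| ≤ 8 * |gapSeq u n|) :
    f ∈ h.expansions := by
  have hfO : f =O[atTop] fun n => invSeq u n ^ 1 := by
    have : f =O[atTop] gapSeq u := IsBigO.of_bound 8 (Eventually.of_forall hfb)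
    simpa using this.trans h.gapSeq_isBigO
  have key : ∀ M : ℕ, ∃ e ∈ h.expansions, (f - e) =O[atTop] fun n => invSeq u n ^ (M+1) := by
    intro M
    induction M with
    | zero => exact ⟨0, zero_mem _, by simpa using hfO⟩
    | succ M ih =>
      obtain ⟨e, he, hM⟩ := ih
      refine ⟨(6 : ℚ) • gapSeq u + fun n => e (n+3),
        add_mem (Subalgebra.smul_mem _ h.gapSeq_mem _) (h.expansions_shift_three he), ?_⟩
      have h1 := (hM.comp_tendsto (tendsto_add_atTop_nat 3)).trans
        (h.inv_add_three_isBigO.pow (M+1))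
      have h2 : (fun n => (invSeq u n ^ 2) ^ (M+1)) =O[atTop] fun n => invSeq u n ^ (M+1+1) := by
        simp only [← pow_mul]
        exact h.pow_isBigO_pow (by omega)
      refine (h1.trans h2).congr_left fun n => ?_
      simp only [Function.comp_apply, Pi.sub_apply, Pi.add_apply, Pi.smul_apply, Rat.smul_def]
      rw [hf n]
      push_cast
      ring
  refine h.mem_of_approx fun M => ?_
  obtain ⟨e, he, hM⟩ := key M
  exact ⟨e, he, hM.trans (h.pow_isBigO_pow (Nat.le_succ M))⟩

theorem monInv_mem (h : MarkoffGrowth u) (i j : ℕ) : monInv u i j ∈ h.expansions :=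
  mul_mem (pow_mem h.inv_mem i) (pow_mem h.inv_succ_mem j)

/-- Integer sequences which become elements of `expansions` after multiplication by a monomial
in the consecutive inverses of `u`. -/
noncomputable def intExpansions (h : MarkoffGrowth u) : Subring (ℕ → ℤ) where
  carrier := {c | ∃ N, (fun n => (c n : ℝ)) * monInv u N N ∈ h.expansions}
  mul_mem' := by
    rintro a b ⟨N, hN⟩ ⟨N', hN'⟩
    refine ⟨N + N', ?_⟩
    convert mul_mem hN hN' using 1
    funext n
    simp only [Pi.mul_apply, monInv]
    push_cast
    ring
  one_mem' := ⟨0, by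
    convert one_mem h.expansions using 1
    funext n
    simp [monInv]⟩
  add_mem' := by
    rintro a b ⟨N, hN⟩ ⟨N', hN'⟩
    refine ⟨N + N', ?_⟩
    convert add_mem (mul_mem hN (h.monInv_mem N' N')) (mul_mem hN' (h.monInv_mem N N)) using 1
    funext n
    simp only [Pi.mul_apply, Pi.add_apply, monInv]
    push_cast
    ring
  zero_mem' := ⟨0, by
    convert zero_mem h.expansions using 1
    funext n
    simp⟩
  neg_mem' := by
    rintro a ⟨N, hN⟩
    refine ⟨N, ?_⟩
    convert neg_mem hN using 1
    funext n
    simp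

theorem self_mem (h : MarkoffGrowth u) : u ∈ h.intExpansions := by
  refine ⟨1, ?_⟩
  convert h.inv_succ_mem using 1
  funext n
  have := h.cast_ne n
  simp [monInv, invSeq, this]

theorem intExpansions_shift (h : MarkoffGrowth u) {c : ℕ → ℤ} (hc : c ∈ h.intExpansions) :
    (fun n => c (n+1)) ∈ h.intExpansions := by
  obtain ⟨N, hN⟩ := hc
  refine ⟨2 * N, ?_⟩
  convert mul_mem (h.expansions_shift hN) (pow_mem (mul_mem h.inv_mem h.inv_mul_shift_mem) N)
    using 1
  funext n
  have h2 := h.cast_ne (n+2)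
  simp only [Pi.mul_apply, Pi.pow_apply, monInv]
  have : invSeq u (n+2) * u (n+2) = 1 := inv_mul_cancel₀ h2
  calc (c (n+1) : ℝ) * (invSeq u n ^ (2 * N) * invSeq u (n + 1) ^ (2 * N))
      = c (n+1) * (invSeq u n ^ (2 * N) * invSeq u (n + 1) ^ (2 * N))
        * (invSeq u (n+2) * u (n+2)) ^ N := by rw [this, one_pow, mul_one]
    _ = _ := by ring

theorem intExpansions_shift_three (h : MarkoffGrowth u) {c : ℕ → ℤ} (hc : c ∈ h.intExpansions) :
    (fun n => c (n+3)) ∈ h.intExpansions :=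
  h.intExpansions_shift (h.intExpansions_shift (h.intExpansions_shift hc))

theorem intExpansions_dichotomy (h : MarkoffGrowth u) {c : ℕ → ℤ} (hc : c ∈ h.intExpansions) :
    (∀ᶠ n in atTop, c n = 0) ∨ ∃ (N i j : ℕ) (r : ℚ), r ≠ 0 ∧
      Tendsto (fun n => (c n : ℝ) * monInv u N N n / monInv u i j n) atTop (𝓝 (r : ℝ)) := by
  obtain ⟨N, hN⟩ := hc
  rcases h.expansions_dominant hN with h0 | ⟨i, j, r, hr, hlim⟩
  · left
    obtain ⟨M, hM⟩ := exists_nat_gt ((N : ℝ) + gold * N)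
    have h1 := ((h0 M).trans_isLittleO (h.pow_isLittleO_monInv hM)).tendsto_div_nhds_zero
    have h2 : Tendsto (fun n => (c n : ℝ)) atTop (𝓝 0) := by
      refine h1.congr fun n => ?_
      rw [Pi.mul_apply, mul_div_assoc, div_self (h.monInv_ne N N n), mul_one]
    have h3 := h2.abs
    rw [abs_zero] at h3
    filter_upwards [h3.eventually_lt_const one_pos] with n hn
    have : |c n| < 1 := by exact_mod_cast hn
    exact Int.abs_lt_one_iff.1 this
  · exact Or.inr ⟨N, i, j, r, hr, hlim⟩

theorem intExpansions_zero_or_ne (h : MarkoffGrowth u) {c : ℕ → ℤ} (hc : c ∈ h.intExpansions) :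
    (∀ᶠ n in atTop, c n = 0) ∨ ∀ᶠ n in atTop, c n ≠ 0 := by
  refine (h.intExpansions_dichotomy hc).imp_right ?_
  rintro ⟨N, i, j, r, hr, hlim⟩
  filter_upwards [hlim.eventually_ne (Rat.cast_ne_zero.2 hr)] with n hn hcn
  simp [hcn] at hn

theorem rational_limit (h : MarkoffGrowth u) {c d : ℕ → ℤ} (hc : c ∈ h.intExpansions)
    (hd : d ∈ h.intExpansions) (hd0 : ∀ᶠ n in atTop, d n ≠ 0) {ν : ℕ → ℕ}
    (hν : Tendsto ν atTop atTop) {K : ℝ}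
    (hK : Tendsto (fun i => (c (ν i) : ℝ) / d (ν i)) atTop (𝓝 K)) : ∃ r : ℚ, (r : ℝ) = K := by
  rcases h.intExpansions_dichotomy hc with hc0 | ⟨N, i, j, r, hr, hlim⟩
  · refine ⟨0, tendsto_nhds_unique ?_ hK⟩
    rw [Rat.cast_zero]
    refine tendsto_const_nhds.congr' ?_
    filter_upwards [hν.eventually hc0] with i hi
    simp [hi]
  rcases h.intExpansions_dichotomy hd with hd0' | ⟨N', i', j', r', hr', hlim'⟩
  · obtain ⟨n, hn, hn'⟩ := (hd0.and hd0').exists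
    exact absurd hn' hn
  have hr'' : (r' : ℝ) ≠ 0 := Rat.cast_ne_zero.2 hr'
  have hrr : (r : ℝ) ≠ 0 := Rat.cast_ne_zero.2 hr
  have hquot := (hlim.div hlim' hr'').comp hν
  have hmon : Tendsto (fun k => monInv u (i + N') (j + N') (ν k) / monInv u (i' + N) (j' + N) (ν k))
      atTop (𝓝 (K / (r / r'))) := by
    refine (hK.div hquot (div_ne_zero hrr hr'')).congr' ?_
    have hc0 : ∀ᶠ n in atTop, c n ≠ 0 := by
      filter_upwards [hlim.eventually_ne hrr] with n hn hcn
      simp [hcn] at hn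
    filter_upwards [hν.eventually hd0, hν.eventually hc0] with k hk hk'
    have e1 : (d (ν k) : ℝ) ≠ 0 := Int.cast_ne_zero.2 hk
    have e2 : (c (ν k) : ℝ) ≠ 0 := Int.cast_ne_zero.2 hk'
    have e3 := h.inv_ne (ν k)
    have e4 := h.inv_ne (ν k + 1)
    simp only [Function.comp_apply, Pi.div_apply, monInv, pow_add]
    field_simp
  rcases lt_trichotomy (((i + N' : ℕ) : ℝ) + gold * (j + N' : ℕ))
    (((i' + N : ℕ) : ℝ) + gold * (j' + N : ℕ)) with hw | hw | hw
  · exfalso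
    have h0 := (h.monInv_isLittleO hw).tendsto_div_nhds_zero.comp hν
    have h1 := hmon.mul h0
    rw [mul_zero] at h1
    refine zero_ne_one (tendsto_nhds_unique (h1.congr fun k => ?_) tendsto_const_nhds)
    have e1 := h.monInv_ne (i + N') (j + N') (ν k)
    have e2 := h.monInv_ne (i' + N) (j' + N) (ν k)
    simp only [Function.comp_apply]
    field_simp
  · obtain ⟨hi, hj⟩ := weight_injective hw
    rw [hi, hj] at hmon
    have h1 : K / (r / r') = 1 := by
      refine tendsto_nhds_unique (hmon.congr fun k => ?_) tendsto_const_nhds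
      exact div_self (h.monInv_ne _ _ _)
    refine ⟨r / r', ?_⟩
    push_cast
    exact (eq_of_div_eq_one h1).symm
  · have h0 := (h.monInv_isLittleO hw).tendsto_div_nhds_zero.comp hν
    have h1 := tendsto_nhds_unique hmon h0
    refine ⟨0, ?_⟩
    rw [Rat.cast_zero]
    exact ((div_eq_zero_iff.1 h1).resolve_right (div_ne_zero hrr hr'')).symm

end MarkoffGrowth

theorem taylor_coeff_succ_of_natDegree_le {A : Type*} [CommRing A] {Q : A[X]} {m : ℕ}
    (hQ : Q.natDegree ≤ m + 1) (r : A) : (taylor r Q).coeff (m+1) = Q.coeff (m+1) := by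
  rw [taylor_coeff]
  have h0 : (hasseDeriv (m+1) Q).natDegree ≤ 0 := by
    have := natDegree_hasseDeriv_le Q (m+1)
    omega
  rw [eq_C_of_natDegree_le_zero h0, eval_C, hasseDeriv_coeff]
  simp

theorem taylor_coeff_of_natDegree_le_succ {A : Type*} [CommRing A] {Q : A[X]} {m : ℕ}
    (hQ : Q.natDegree ≤ m + 1) (r : A) :
    (taylor r Q).coeff m = Q.coeff m + (m + 1) * Q.coeff (m+1) * r := by
  rw [taylor_coeff]
  have h0 : (hasseDeriv m Q).natDegree ≤ 1 := by
    have := natDegree_hasseDeriv_le Q m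
    omega
  rw [eq_X_add_C_of_natDegree_le_one h0]
  simp only [hasseDeriv_coeff, eval_add, eval_mul, eval_C, eval_X]
  simp [add_comm 1 m]
  ring

namespace MarkoffGrowth

variable {u : ℕ → ℤ}

/-- Evaluation at an index, as a ring homomorphism to the reals. -/
noncomputable def evalAt (h : MarkoffGrowth u) (n : ℕ) : h.intExpansions →+* ℝ :=
  (Int.castRingHom ℝ).comp ((Pi.evalRingHom (fun _ : ℕ => ℤ) n).comp h.intExpansions.subtype)

theorem evalAt_apply (h : MarkoffGrowth u) (n : ℕ) (c : h.intExpansions) :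
    h.evalAt n c = ((c : ℕ → ℤ) n : ℝ) := rfl

/-- Translation by three as a ring endomorphism. -/
noncomputable def shiftThree (h : MarkoffGrowth u) : h.intExpansions →+* h.intExpansions where
  toFun c := ⟨fun n => (c : ℕ → ℤ) (n+3), h.intExpansions_shift_three c.2⟩
  map_one' := rfl
  map_mul' _ _ := rfl
  map_zero' := rfl
  map_add' _ _ := rfl

theorem evalAt_shiftThree (h : MarkoffGrowth u) (n : ℕ) :
    (h.evalAt n).comp h.shiftThree = h.evalAt (n+3) := rfl

theorem tendsto_inv (h : MarkoffGrowth u) : Tendsto (invSeq u) atTop (𝓝 0) := by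
  rw [tendsto_zero_iff_abs_tendsto_zero]
  exact h.tendsto_abs_inv

theorem tendsto_zero_of_le_gap (h : MarkoffGrowth u) {f : ℕ → ℝ}
    (hfb : ∀ n, |f n| ≤ 8 * |gapSeq u n|) : Tendsto f atTop (𝓝 0) := by
  have h1 : f =O[atTop] gapSeq u := IsBigO.of_bound 8 (Eventually.of_forall hfb)
  exact (h1.trans h.gapSeq_isBigO).trans_tendsto h.tendsto_inv

theorem not_algebraic_relation (h : MarkoffGrowth u) {f : ℕ → ℝ}
    (hf : ∀ n, f n = 6 * gapSeq u n + f (n+3)) (hfb : ∀ n, |f n| ≤ 8 * |gapSeq u n|)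
    {n₀ : ℕ} (hirr : ∀ i, Irrational (f (n₀ + 3 * i))) (m : ℕ) :
    ∀ P : h.intExpansions[X], P.natDegree ≤ m →
      (¬ ∀ᶠ n in atTop, (P.coeff m : ℕ → ℤ) n = 0) →
      ¬ ∀ᶠ i in atTop, P.eval₂ (h.evalAt (n₀ + 3 * i)) (f (n₀ + 3 * i)) = 0 := by
  have hν : Tendsto (fun i => n₀ + 3 * i) atTop atTop :=
    tendsto_atTop_mono (fun i => show i ≤ n₀ + 3 * i by omega) tendsto_id
  induction m with
  | zero =>
    intro P hP hP0 hrel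
    have h1 := (h.intExpansions_zero_or_ne (P.coeff 0).2).resolve_left hP0
    obtain ⟨i, hi, hi'⟩ := (hrel.and (hν.eventually h1)).exists
    rw [eq_C_of_natDegree_le_zero hP, eval₂_C, evalAt_apply] at hi
    exact hi' (by exact_mod_cast hi)
  | succ m ih =>
    intro P hP hP0 hrel
    set a := P.coeff (m+1) with ha
    set c := P.coeff m with hc
    have hane := (h.intExpansions_zero_or_ne a.2).resolve_left hP0
    let U : h.intExpansions := ⟨u, h.self_mem⟩ * h.shiftThree ⟨u, h.self_mem⟩
    let V : h.intExpansions := 6 * ⟨fun n => u (n+1), h.intExpansions_shift h.self_mem⟩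
    have hU : ∀ n, h.evalAt n U = (u n : ℝ) * u (n+3) := fun n => by
      rw [map_mul]
      rfl
    have hV : ∀ n, h.evalAt n V = 6 * (u (n+1) : ℝ) := fun n => by
      rw [map_mul, map_ofNat]
      rfl
    set P' := P.map h.shiftThree with hP'
    have hdeg : P'.natDegree = m + 1 := by
      refine le_antisymm (natDegree_map_le.trans hP) (le_natDegree_of_ne_zero fun h0 => hP0 ?_)
      rw [hP', coeff_map] at h0
      filter_upwards [eventually_ge_atTop 3] with n hn
      have := congrFun (congrArg Subtype.val h0) (n - 3)
      change (a : ℕ → ℤ) (n - 3 + 3) = 0 at this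
      rwa [Nat.sub_add_cancel hn] at this
    set Q := scaleRoots P' U with hQ
    have hQdeg : Q.natDegree ≤ m + 1 := by rw [hQ, natDegree_scaleRoots, hdeg]
    set P₂ := (taylor (-V) Q).comp (C U * X) with hP₂
    have hP₂rel : ∀ᶠ i in atTop, P₂.eval₂ (h.evalAt (n₀ + 3 * i)) (f (n₀ + 3 * i)) = 0 := by
      filter_upwards [(tendsto_add_atTop_nat 1).eventually hrel] with i hi
      set n := n₀ + 3 * i with hn
      have hn3 : n₀ + 3 * (i + 1) = n + 3 := by omega
      rw [hn3] at hi
      have hpt : h.evalAt n U * f n + h.evalAt n (-V) = h.evalAt n U * f (n+3) := by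
        have h0 := h.cast_ne n
        have h3 := h.cast_ne (n+3)
        rw [map_neg, hU, hV, hf n, gapSeq]
        field_simp
        ring
      rw [hP₂, eval₂_comp, taylor_apply, eval₂_comp]
      simp only [eval₂_add, eval₂_mul, eval₂_C, eval₂_X]
      rw [hpt, hQ, scaleRoots_eval₂_mul, hP', eval₂_map, evalAt_shiftThree, hi, mul_zero]
    have hcoef1 : P₂.coeff (m+1) = h.shiftThree a * U ^ (m+1) := by
      rw [hP₂, comp_C_mul_X_coeff, taylor_coeff_succ_of_natDegree_le hQdeg, hQ, coeff_scaleRoots,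
        hdeg, hP', coeff_map, Nat.sub_self, pow_zero, mul_one]
    have hcoef0 : P₂.coeff m
        = (h.shiftThree c * U - (m + 1) * h.shiftThree a * V) * U ^ m := by
      rw [hP₂, comp_C_mul_X_coeff, taylor_coeff_of_natDegree_le_succ hQdeg, hQ, coeff_scaleRoots,
        coeff_scaleRoots, hdeg, hP', coeff_map, coeff_map, Nat.sub_self, pow_zero, mul_one,
        Nat.add_sub_cancel_left, pow_one]
      ring
    have hP₂deg : P₂.natDegree ≤ m + 1 := by
      rw [natDegree_le_iff_coeff_eq_zero]
      intro k hk
      rw [hP₂, comp_C_mul_X_coeff, coeff_eq_zero_of_natDegree_lt, zero_mul]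
      rw [natDegree_taylor]
      omega
    have hP₃ : ∀ᶠ n in atTop, ((C a * P₂ - C (P₂.coeff (m+1)) * P).coeff m : ℕ → ℤ) n = 0 := by
      by_contra hne
      refine ih _ ?_ hne ?_
      · rw [natDegree_le_iff_coeff_eq_zero]
        intro k hk
        rw [coeff_sub, coeff_C_mul, coeff_C_mul]
        rcases (Nat.succ_le_of_lt hk).eq_or_lt with rfl | hk
        · rw [Nat.succ_eq_add_one, ← ha, mul_comm, sub_self]
        · rw [coeff_eq_zero_of_natDegree_lt (hP₂deg.trans_lt hk),
            coeff_eq_zero_of_natDegree_lt (hP.trans_lt hk), mul_zero, mul_zero, sub_self]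
      · filter_upwards [hrel, hP₂rel] with i hi hi'
        rw [eval₂_sub, eval₂_mul, eval₂_mul, hi, hi', mul_zero, mul_zero, sub_self]
    have hstep : ∀ᶠ n in atTop, ((c : ℕ → ℤ) (n+3) : ℝ) / (a : ℕ → ℤ) (n+3) + (m+1) * f (n+3)
        = ((c : ℕ → ℤ) n : ℝ) / (a : ℕ → ℤ) n + (m+1) * f n := by
      have hne3 := (tendsto_add_atTop_nat 3).eventually hane
      filter_upwards [hP₃, hane, hne3] with n hn hn0 hn3
      have key : h.evalAt n ((C a * P₂ - C (P₂.coeff (m+1)) * P).coeff m) = 0 := by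
        rw [evalAt_apply, hn, Int.cast_zero]
      rw [coeff_sub, coeff_C_mul, coeff_C_mul, hcoef0, hcoef1] at key
      simp only [map_sub, map_mul, map_pow, map_add, map_one, map_natCast, hU, hV] at key
      rw [show h.evalAt n (h.shiftThree c) = ((c : ℕ → ℤ) (n+3) : ℝ) from rfl,
        show h.evalAt n (h.shiftThree a) = ((a : ℕ → ℤ) (n+3) : ℝ) from rfl,
        evalAt_apply, ← hc, evalAt_apply] at key
      have e0 := h.cast_ne n
      have e3 := h.cast_ne (n+3)
      have e1 : ((a : ℕ → ℤ) n : ℝ) ≠ 0 := Int.cast_ne_zero.2 hn0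
      have e2 : ((a : ℕ → ℤ) (n+3) : ℝ) ≠ 0 := Int.cast_ne_zero.2 hn3
      have eU : ((u n : ℝ) * u (n+3)) ^ m ≠ 0 := pow_ne_zero _ (mul_ne_zero e0 e3)
      rw [hf n, gapSeq]
      field_simp
      refine mul_left_cancel₀ eU ?_
      linear_combination key
    obtain ⟨N, hN⟩ := eventually_atTop.1 (hν.eventually hstep)
    set H : ℕ → ℝ := fun n => ((c : ℕ → ℤ) n : ℝ) / (a : ℕ → ℤ) n with hH
    have hconst : ∀ i, N ≤ i → H (n₀ + 3 * i) + (m+1) * f (n₀ + 3 * i)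
        = H (n₀ + 3 * N) + (m+1) * f (n₀ + 3 * N) := by
      intro i hi
      induction i, hi using Nat.le_induction with
      | base => rfl
      | succ i hi ih' => rw [← ih', ← hN i hi, show n₀ + 3 * (i+1) = n₀ + 3 * i + 3 by ring]
    set K := H (n₀ + 3 * N) + (m+1) * f (n₀ + 3 * N) with hK
    have hlim : Tendsto (fun i => H (n₀ + 3 * i)) atTop (𝓝 K) := by
      have h1 : Tendsto (fun i => K - (m+1) * f (n₀ + 3 * i)) atTop (𝓝 (K - (m+1) * 0)) :=
        tendsto_const_nhds.sub (((h.tendsto_zero_of_le_gap hfb).comp hν).const_mul _)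
      rw [mul_zero, sub_zero] at h1
      refine h1.congr' ?_
      filter_upwards [eventually_ge_atTop N] with i hi
      rw [← hconst i hi]
      ring
    obtain ⟨r, hr⟩ := h.rational_limit c.2 a.2 hane hν hlim
    refine hirr N ⟨(r - ((c : ℕ → ℤ) (n₀ + 3 * N) : ℚ) / (a : ℕ → ℤ) (n₀ + 3 * N)) / (m+1), ?_⟩
    push_cast
    have hm : ((m : ℝ) + 1) ≠ 0 := by positivity
    rw [hr, hK, hH]
    field_simp
    ring

end MarkoffGrowth

theorem isIntegral_pow_smul_aeval {A : Type*} [CommRing A] {g : A} {a : ℤ}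
    (ha : IsIntegral ℤ (a • g)) {P : ℤ[X]} {N : ℕ} (hP : P.natDegree ≤ N) :
    IsIntegral ℤ (a ^ N • aeval g P) := by
  rw [aeval_eq_sum_range' (Nat.lt_succ_of_le hP), Finset.smul_sum]
  refine IsIntegral.sum _ fun j hj => ?_
  have hj' : j ≤ N := Nat.lt_succ_iff.1 (Finset.mem_range.1 hj)
  have e : a ^ N • P.coeff j • g ^ j = (a ^ (N - j) * P.coeff j) • (a • g) ^ j := by
    rw [_root_.smul_pow, smul_smul, smul_smul]
    congr 1
    rw [← Nat.sub_add_cancel hj', pow_add, Nat.add_sub_cancel]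
    ring
  rw [e]
  exact (ha.pow j).smul _

open IntermediateField in
/-- A lower bound for integer polynomials at an algebraic number, in terms of their size
on a disc containing all conjugates. -/
theorem exists_lower_bound_of_isAlgebraic {θ : ℝ} (hθ : IsAlgebraic ℚ θ) :
    ∃ (D : ℕ) (T : ℝ), 0 ≤ T ∧ ∀ N : ℕ, ∃ C : ℝ, 0 < C ∧ ∀ P : ℤ[X], P.natDegree ≤ N →
      aeval θ P ≠ 0 → ∀ B : ℝ, (∀ z : ℂ, ‖z‖ ≤ T → ‖aeval z P‖ ≤ B) →
      1 ≤ C * |aeval θ P| * B ^ D := by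
  classical
  have hint : IsIntegral ℚ θ := hθ.isIntegral
  have : FiniteDimensional ℚ ℚ⟮θ⟯ := adjoin.finiteDimensional hint
  let g : ℚ⟮θ⟯ := AdjoinSimple.gen ℚ θ
  let ι : ℚ⟮θ⟯ →ₐ[ℚ] ℂ := (Complex.ofRealAm.restrictScalars ℚ).comp (ℚ⟮θ⟯.val)
  have hι : ι g = (θ : ℂ) := rfl
  have hgalg : IsAlgebraic ℤ g :=
    (IsFractionRing.isAlgebraic_iff ℤ ℚ ℚ⟮θ⟯).2 (IsIntegral.of_finite ℚ g).isAlgebraic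
  obtain ⟨a, ha0, ha⟩ := hgalg.exists_integral_multiple
  let S := (Finset.univ : Finset (ℚ⟮θ⟯ →ₐ[ℚ] ℂ)).erase ι
  have haR : (0 : ℝ) < |(a : ℝ)| := abs_pos.2 (Int.cast_ne_zero.2 ha0)
  refine ⟨S.card, ∑ σ : ℚ⟮θ⟯ →ₐ[ℚ] ℂ, ‖σ g‖, Finset.sum_nonneg fun _ _ => norm_nonneg _,
    fun N => ⟨|(a : ℝ)| ^ N * (|(a : ℝ)| ^ N) ^ S.card, by positivity, ?_⟩⟩
  intro P hP hne B hB
  have hσ : ∀ σ : ℚ⟮θ⟯ →ₐ[ℚ] ℂ, ‖σ (a ^ N • aeval g P)‖ = |(a : ℝ)| ^ N * ‖aeval (σ g) P‖ := by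
    intro σ
    have e : σ (aeval g P) = aeval (σ g) P :=
      (aeval_algHom_apply (σ.restrictScalars ℤ) g P).symm
    rw [zsmul_eq_mul, map_mul, map_intCast, e, norm_mul]
    push_cast
    rw [norm_pow, Complex.norm_intCast]
  have hιP : ‖aeval (ι g) P‖ = |aeval θ P| := by
    rw [hι, ← Real.norm_eq_abs, ← Complex.norm_real]
    congr 1
    exact aeval_algHom_apply (Complex.ofRealAm.restrictScalars ℤ) θ P
  have hy0 : (a ^ N • aeval g P) ≠ 0 := by
    intro h0
    have := hσ ι
    rw [h0, map_zero, norm_zero, hιP] at this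
    exact (mul_pos (pow_pos haR N) (abs_pos.2 hne)).ne this
  have hprod : 1 ≤ ∏ σ : ℚ⟮θ⟯ →ₐ[ℚ] ℂ, ‖σ (a ^ N • aeval g P)‖ := by
    rw [← norm_prod, ← Algebra.norm_eq_prod_embeddings ℚ ℂ]
    obtain ⟨z, hz⟩ := IsIntegrallyClosed.isIntegral_iff.1
      (Algebra.isIntegral_norm ℚ (isIntegral_pow_smul_aeval ha hP))
    have hz0 : z ≠ 0 := by
      rintro rfl
      rw [map_zero] at hz
      exact hy0 (Algebra.norm_eq_zero_iff.1 hz.symm)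
    rw [← hz]
    have : (algebraMap ℚ ℂ (algebraMap ℤ ℚ z)) = (z : ℂ) := by simp
    rw [this, Complex.norm_intCast]
    exact_mod_cast Int.one_le_abs hz0
  rw [← Finset.mul_prod_erase _ _ (Finset.mem_univ ι), hσ, hιP] at hprod
  refine hprod.trans ?_
  have hle : ∏ σ ∈ S, ‖σ (a ^ N • aeval g P)‖ ≤ ∏ _σ ∈ S, |(a : ℝ)| ^ N * B := by
    refine Finset.prod_le_prod (fun _ _ => norm_nonneg _) fun σ _ => ?_
    rw [hσ]
    gcongr
    exact hB _ (Finset.single_le_sum (f := fun σ : ℚ⟮θ⟯ →ₐ[ℚ] ℂ => ‖σ g‖)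
      (fun _ _ => norm_nonneg _) (Finset.mem_univ σ))
  rw [Finset.prod_const, mul_pow] at hle
  calc _ ≤ |(a : ℝ)| ^ N * |aeval θ P| * ((|(a : ℝ)| ^ N) ^ S.card * B ^ S.card) := by gcongr
    _ = _ := by ring

/-- The exponent `(i, j)` of a monomial in two variables. -/
noncomputable def pairExp (i j : ℕ) : Fin 2 →₀ ℕ := Finsupp.single 0 i + Finsupp.single 1 j

theorem pairExp_zero (i j : ℕ) : pairExp i j 0 = i := by simp [pairExp]

theorem pairExp_one (i j : ℕ) : pairExp i j 1 = j := by simp [pairExp]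

theorem pairExp_self (m : Fin 2 →₀ ℕ) : pairExp (m 0) (m 1) = m := by
  ext i
  fin_cases i
  · exact pairExp_zero _ _
  · exact pairExp_one _ _

theorem evInv_monomial (u : ℕ → ℤ) (i j : ℕ) (r : ℚ) (n : ℕ) :
    evInv u (MvPolynomial.monomial (pairExp i j) r) n = r * monInv u i j n := by
  have e : evInv u (MvPolynomial.monomial (pairExp i j) r)
      = algebraMap ℚ (ℕ → ℝ) r * (invSeq u ^ i * (fun n => invSeq u (n+1)) ^ j) := by
    rw [evInv, MvPolynomial.aeval_monomial, Finsupp.prod_fintype _ _ (by simp)]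
    simp [Fin.prod_univ_two, pairExp_zero, pairExp_one]
  rw [e]
  simp [monInv]

namespace MarkoffGrowth

variable {u : ℕ → ℤ}

theorem exists_auxiliary (h : MarkoffGrowth u) {f : ℕ → ℝ} (hf : f ∈ h.expansions) {L M : ℕ}
    (hLM : M ^ 2 < L ^ 3) : ∃ p : Fin L × Fin L × Fin L → ℤ, p ≠ 0 ∧
      (fun n => ∑ x, (p x : ℝ) * monInv u x.1 x.2.1 n * f n ^ (x.2.2 : ℕ))
        =O[atTop] fun n => invSeq u n ^ M := by
  obtain ⟨q, hq⟩ := hf M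
  let v : Fin L × Fin L × Fin L → MvPolynomial (Fin 2) ℚ := fun x =>
    MvPolynomial.monomial (pairExp x.1 x.2.1) 1 * q ^ (x.2.2 : ℕ)
  let Φ := Fintype.linearCombination ℚ v
  let Λ : (Fin L × Fin L × Fin L → ℚ) →ₗ[ℚ] (Fin M × Fin M → ℚ) :=
    LinearMap.pi fun y => (MvPolynomial.lcoeff ℚ (pairExp y.1 y.2)) ∘ₗ Φ
  have hker : LinearMap.ker Λ ≠ ⊥ := by
    apply LinearMap.ker_ne_bot_of_finrank_lt
    simp only [Module.finrank_fintype_fun_eq_card, Fintype.card_prod, Fintype.card_fin]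
    nlinarith
  obtain ⟨r, hr, hr0⟩ := (Submodule.ne_bot_iff _).1 hker
  obtain ⟨d, hd⟩ := IsLocalization.exist_integer_multiples_of_finite (nonZeroDivisors ℤ) r
  choose p hp using hd
  have hd0 : ((d : ℤ) : ℚ) ≠ 0 := Int.cast_ne_zero.2 (nonZeroDivisors.coe_ne_zero d)
  have hp' : ∀ x, (p x : ℚ) = (d : ℤ) * r x := fun x => by
    have := hp x
    simpa [Algebra.smul_def] using this
  refine ⟨p, fun h0 => hr0 ?_, ?_⟩
  · funext x
    have := hp' x
    rw [h0, Pi.zero_apply, Int.cast_zero] at this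
    exact (mul_eq_zero.1 this.symm).resolve_left hd0
  · have hΦ : evInv u (Φ r) =O[atTop] fun n => invSeq u n ^ M := by
      refine h.evInv_isBigO_pow fun m hm => ?_
      by_contra hlt
      push Not at hlt
      refine MvPolynomial.mem_support_iff.1 hm ?_
      have := congrFun (LinearMap.mem_ker.1 hr) (⟨m 0, hlt.1⟩, ⟨m 1, hlt.2⟩)
      simpa [Λ, pairExp_self] using this
    have hqm : (fun n => evInv u q n) ∈ h.expansions := h.evInv_mem q
    have hdiff : (fun n => ∑ x, (p x : ℝ) * monInv u x.1 x.2.1 n * f n ^ (x.2.2 : ℕ)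
        - ((d : ℤ) : ℝ) * evInv u (Φ r) n) =O[atTop] fun n => invSeq u n ^ M := by
      have hterm : ∀ x : Fin L × Fin L × Fin L, (fun n => (p x : ℝ) * (monInv u x.1 x.2.1 n *
          (f n ^ (x.2.2 : ℕ) - evInv u q n ^ (x.2.2 : ℕ)))) =O[atTop] fun n => invSeq u n ^ M := by
        intro x
        have hpow : (fun n => f n ^ (x.2.2 : ℕ) - evInv u q n ^ (x.2.2 : ℕ))
            =O[atTop] fun n => invSeq u n ^ M := by
          have hsum : (∑ i ∈ Finset.range (x.2.2 : ℕ), f ^ i * evInv u q ^ ((x.2.2 : ℕ) - 1 - i))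
              ∈ h.expansions := sum_mem fun i _ => mul_mem (pow_mem hf i) (pow_mem hqm _)
          have := (h.expansions_bounded hsum).mul hq
          simp only [one_mul] at this
          refine this.congr_left fun n => ?_
          have e := (Commute.all f (evInv u q)).geom_sum₂_mul (x.2.2 : ℕ)
          exact congrFun e n
        have := ((h.expansions_bounded (h.monInv_mem x.1 x.2.1)).mul hpow).const_mul_left (p x : ℝ)
        simpa using this
      refine (IsBigO.fun_sum fun x (_ : x ∈ Finset.univ) => hterm x).congr_left fun n => ?_
      have e : evInv u (Φ r) n
          = ∑ x, (r x : ℝ) * (monInv u x.1 x.2.1 n * evInv u q n ^ (x.2.2 : ℕ)) := by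
        simp only [Φ, v, Fintype.linearCombination_apply, map_sum, map_smul, map_mul, map_pow,
          Finset.sum_apply, Pi.smul_apply, Pi.mul_apply, Pi.pow_apply, evInv_monomial,
          Rat.smul_def, Rat.cast_one, one_mul]
      rw [e, Finset.mul_sum, ← Finset.sum_sub_distrib]
      refine Finset.sum_congr rfl fun x _ => ?_
      have : (p x : ℝ) = (d : ℤ) * r x := by exact_mod_cast congrArg (Rat.cast : ℚ → ℝ) (hp' x)
      rw [this]
      ring
    refine (hdiff.add (hΦ.const_mul_left ((d : ℤ) : ℝ))).congr_left fun n => ?_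
    ring

theorem tendsto_mul_zero_of_le_gap (h : MarkoffGrowth u) {f : ℕ → ℝ}
    (hfb : ∀ n, |f n| ≤ 8 * |gapSeq u n|) : Tendsto (fun n => u n * f n) atTop (𝓝 0) := by
  have h1 : f =O[atTop] gapSeq u := IsBigO.of_bound 8 (Eventually.of_forall hfb)
  have h2 := (isBigO_refl (fun n => (u n : ℝ)) atTop).mul h1
  refine h2.trans_tendsto ?_
  have h3 : Tendsto (fun n => invSeq u (n+2) * ratioSeq u (n+1)) atTop (𝓝 0) :=
    ((isBigO_refl (fun n => invSeq u (n+2)) atTop).mul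
      (h.expansions_bounded (h.expansions_shift h.ratioSeq_mem))).trans_tendsto
      (by simpa [Function.comp_def] using h.tendsto_inv.comp (tendsto_add_atTop_nat 2))
  refine h3.congr fun n => ?_
  have e := congrFun h.gapSeq_eq n
  simp only [Pi.mul_apply] at e
  have hu : u n * invSeq u n = 1 := mul_inv_cancel₀ (h.cast_ne n)
  rw [e]
  linear_combination -(invSeq u (n+2) * ratioSeq u (n+1)) * hu

theorem irrational_of_approx (h : MarkoffGrowth u) {f : ℕ → ℝ}
    (hf0 : ∀ n, f n ≠ 0) (hfb : ∀ n, |f n| ≤ 8 * |gapSeq u n|) {n₀ : ℕ} {θ : ℝ}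
    (hθ : ∀ i, ∃ p : ℤ, θ = p / u (n₀ + 3 * i) + f (n₀ + 3 * i)) : Irrational θ := by
  rintro ⟨r, hr⟩
  have hν : Tendsto (fun i => n₀ + 3 * i) atTop atTop :=
    tendsto_atTop_mono (fun i => show i ≤ n₀ + 3 * i by omega) tendsto_id
  have hlim := (((h.tendsto_mul_zero_of_le_gap hfb).comp hν).const_mul (r.den : ℝ)).abs
  rw [mul_zero, abs_zero] at hlim
  obtain ⟨i, hi⟩ := (hlim.eventually_lt_const one_pos).exists
  obtain ⟨p, hp⟩ := hθ i
  have hu := h.cast_ne (n₀ + 3 * i)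
  have hden : (r.den : ℝ) ≠ 0 := by exact_mod_cast r.den_ne_zero
  have hrd : (r : ℝ) = r.num / r.den := by exact_mod_cast (Rat.num_div_den r).symm
  have hz : (r.den : ℝ) * (u (n₀ + 3 * i) * f (n₀ + 3 * i))
      = ((r.num * u (n₀ + 3 * i) - r.den * p : ℤ) : ℝ) := by
    have hfe : f (n₀ + 3 * i) = r.num / r.den - p / u (n₀ + 3 * i) := by
      rw [← hrd, hr, hp]
      ring
    rw [hfe]
    push_cast
    field_simp
  simp only [Function.comp_apply] at hi
  rw [hz] at hi
  have hz0 : r.num * u (n₀ + 3 * i) - r.den * p = 0 := by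
    rw [← Int.abs_lt_one_iff]
    exact_mod_cast hi
  rw [hz0, Int.cast_zero] at hz
  exact mul_ne_zero hden (mul_ne_zero hu (hf0 _)) hz

theorem not_auxiliary_vanish (h : MarkoffGrowth u) {f : ℕ → ℝ}
    (hf : ∀ n, f n = 6 * gapSeq u n + f (n+3)) (hfb : ∀ n, |f n| ≤ 8 * |gapSeq u n|)
    {n₀ : ℕ} (hirr : ∀ i, Irrational (f (n₀ + 3 * i))) {L : ℕ}
    {p : Fin L × Fin L × Fin L → ℤ} (hp : p ≠ 0) :
    ¬ ∀ᶠ i in atTop, ∑ x, (p x : ℝ) * monInv u x.1 x.2.1 (n₀ + 3 * i)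
      * f (n₀ + 3 * i) ^ (x.2.2 : ℕ) = 0 := by
  intro hvan
  obtain ⟨x₁, hx₁⟩ := Function.ne_iff.1 hp
  obtain ⟨x₀, hx₀, hmax⟩ := Finset.exists_max_image (Finset.univ.filter fun x => p x ≠ 0)
    (fun x => (x.2.2 : ℕ)) ⟨x₁, by simpa using hx₁⟩
  simp only [Finset.mem_filter, Finset.mem_univ, true_and] at hx₀ hmax
  let U : h.intExpansions := ⟨u, h.self_mem⟩
  let U' : h.intExpansions := ⟨fun n => u (n+1), h.intExpansions_shift h.self_mem⟩
  let P : h.intExpansions[X] := ∑ x : Fin L × Fin L × Fin L,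
    C ((p x : h.intExpansions) * (U ^ (L - x.1) * U' ^ (L - x.2.1))) * X ^ (x.2.2 : ℕ)
  have hscale : ∀ (n : ℕ) (a b : Fin L), (u n : ℝ) ^ (L - a) * (u (n+1) : ℝ) ^ (L - b)
      = ((u n : ℝ) * u (n+1)) ^ L * monInv u a b n := by
    intro n a b
    have e0 := h.cast_ne n
    have e1 := h.cast_ne (n+1)
    rw [pow_sub₀ _ e0 a.2.le, pow_sub₀ _ e1 b.2.le, monInv, invSeq, invSeq, inv_pow, inv_pow]
    ring
  have hev : ∀ (n : ℕ) (x : Fin L × Fin L × Fin L),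
      h.evalAt n ((p x : h.intExpansions) * (U ^ (L - x.1) * U' ^ (L - x.2.1)))
        = ((u n : ℝ) * u (n+1)) ^ L * ((p x : ℝ) * monInv u x.1 x.2.1 n) := by
    intro n x
    rw [map_mul, map_mul, map_pow, map_pow, map_intCast]
    change (p x : ℝ) * ((u n : ℝ) ^ (L - x.1) * (u (n+1) : ℝ) ^ (L - x.2.1)) = _
    rw [hscale]
    ring
  refine h.not_algebraic_relation hf hfb hirr x₀.2.2 P ?_ ?_ ?_
  · refine natDegree_sum_le_of_forall_le _ _ fun x _ => ?_
    by_cases hx : p x = 0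
    · simp [hx]
    · exact (natDegree_C_mul_X_pow_le _ _).trans (hmax x hx)
  · let q : MvPolynomial (Fin 2) ℚ := ∑ a : Fin L, ∑ b : Fin L,
      MvPolynomial.monomial (pairExp a b) (p (a, b, x₀.2.2) : ℚ)
    have hq : q ≠ 0 := by
      intro h0
      have hcoef : q.coeff (pairExp x₀.1 x₀.2.1) = p x₀ := by
        simp only [q, MvPolynomial.coeff_sum, MvPolynomial.coeff_monomial]
        rw [Finset.sum_eq_single x₀.1, Finset.sum_eq_single x₀.2.1]
        · simp
        · intro b _ hb
          refine if_neg fun he => hb (Fin.ext ?_)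
          simpa [pairExp_one] using DFunLike.congr_fun he 1
        · simp
        · intro a _ ha
          refine Finset.sum_eq_zero fun b _ => if_neg fun he => ha (Fin.ext ?_)
          simpa [pairExp_zero] using DFunLike.congr_fun he 0
        · simp
      rw [h0, MvPolynomial.coeff_zero] at hcoef
      exact hx₀ (by exact_mod_cast hcoef.symm)
    obtain ⟨m, hm, hdom⟩ := h.evInv_dominant hq
    have hcoef0 : ((q.coeff m : ℚ) : ℝ) ≠ 0 := Rat.cast_ne_zero.2 (MvPolynomial.mem_support_iff.1 hm)
    have hne : ∀ᶠ n in atTop, evInv u q n ≠ 0 := by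
      filter_upwards [hdom.def (half_pos (_root_.abs_pos.2 hcoef0))] with n hn h0
      rw [h0, zero_sub, norm_neg, norm_mul, Real.norm_eq_abs] at hn
      have h1 := norm_pos_iff.2 (h.monInv_ne (m 0) (m 1) n)
      have h2 := mul_pos (_root_.abs_pos.2 hcoef0) h1
      linarith
    intro hz
    obtain ⟨n, hn, hn'⟩ := (hne.and hz).exists
    have hval : h.evalAt n (P.coeff x₀.2.2) = ((u n : ℝ) * u (n+1)) ^ L * evInv u q n := by
      simp only [P, finsetSum_coeff, coeff_C_mul, coeff_X_pow, map_sum]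
      have : evInv u q n = ∑ a : Fin L, ∑ b : Fin L,
          (p (a, b, x₀.2.2) : ℝ) * monInv u a b n := by
        simp only [q, map_sum, Finset.sum_apply, evInv_monomial, Rat.cast_intCast]
      rw [this, Fintype.sum_prod_type, Finset.mul_sum]
      refine Finset.sum_congr rfl fun a _ => ?_
      rw [Fintype.sum_prod_type, Finset.mul_sum]
      refine Finset.sum_congr rfl fun b _ => ?_
      rw [Finset.sum_eq_single x₀.2.2]
      · rw [if_pos rfl, mul_one, hev]
      · intro c _ hc
        rw [if_neg fun he => hc (Fin.ext he.symm), mul_zero, map_zero]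
      · simp
    rw [evalAt_apply, hn', Int.cast_zero] at hval
    exact mul_ne_zero (pow_ne_zero _ (mul_ne_zero (h.cast_ne _) (h.cast_ne _))) hn hval.symm
  · filter_upwards [hvan] with i hi
    simp only [P, eval₂_finsetSum, eval₂_mul, eval₂_C, eval₂_X_pow, hev]
    rw [← mul_zero (((u (n₀ + 3 * i) : ℝ) * u (n₀ + 3 * i + 1)) ^ L), ← hi, Finset.mul_sum]
    refine Finset.sum_congr rfl fun x _ => ?_
    ring

theorem transcendental_of_approx (h : MarkoffGrowth u) {f : ℕ → ℝ}
    (hf : ∀ n, f n = 6 * gapSeq u n + f (n+3)) (hf0 : ∀ n, f n ≠ 0)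
    (hfb : ∀ n, |f n| ≤ 8 * |gapSeq u n|) {n₀ : ℕ} {θ : ℝ}
    (hθ : ∀ i, ∃ p : ℤ, θ = p / u (n₀ + 3 * i) + f (n₀ + 3 * i)) : Transcendental ℚ θ := by
  intro halg
  have hν : Tendsto (fun i => n₀ + 3 * i) atTop atTop :=
    tendsto_atTop_mono (fun i => show i ≤ n₀ + 3 * i by omega) tendsto_id
  choose p hp using hθ
  have hirr : ∀ i, Irrational (f (n₀ + 3 * i)) := fun i => by
    have h1 := (h.irrational_of_approx hf0 hfb (fun i => ⟨p i, hp i⟩)).sub_ratCast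
      ((p i : ℚ) / u (n₀ + 3 * i))
    convert h1 using 1
    push_cast
    linear_combination -hp i
  obtain ⟨D, T, hT, hlow⟩ := exists_lower_bound_of_isAlgebraic halg
  -- parameters of the auxiliary function
  obtain ⟨m, hm⟩ : ∃ m, m = 4 * (D + 1) + 1 := ⟨_, rfl⟩
  obtain ⟨N, hN⟩ : ∃ N, N + 1 = m ^ 2 := ⟨m ^ 2 - 1, Nat.sub_add_cancel (Nat.one_le_pow _ _ (by omega))⟩
  obtain ⟨M, hM⟩ : ∃ M, M + 1 = m ^ 3 := ⟨m ^ 3 - 1, Nat.sub_add_cancel (Nat.one_le_pow _ _ (by omega))⟩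
  have hLM : M ^ 2 < (N + 1) ^ 3 := by
    rw [hN, ← pow_mul, show 2 * 3 = 3 * 2 by norm_num, pow_mul, ← hM]
    exact Nat.pow_lt_pow_left (Nat.lt_succ_self M) two_ne_zero
  obtain ⟨c, hc0, hcO⟩ := h.exists_auxiliary (h.mem_of_gap_recurrence hf hfb) hLM
  have hweight : ((2 * N * (D + 1) : ℕ) : ℝ) + gold * (N * (D + 1) : ℕ) < M := by
    have h1 : 4 * (N * (D + 1)) < M := by
      have : 4 * (D + 1) = m - 1 := by omega
      obtain ⟨k, rfl⟩ : ∃ k, m = k + 1 := ⟨4 * (D + 1), hm⟩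
      have hk : 4 * (D + 1) = k := by omega
      have : 4 * (N * (D + 1)) = N * k := by rw [← hk]; ring
      nlinarith
    have h2 : ((4 * (N * (D + 1)) : ℕ) : ℝ) < M := by exact_mod_cast h1
    have h3 : (0 : ℝ) ≤ (N * (D + 1) : ℕ) := Nat.cast_nonneg _
    have h4 := gold_lt_two
    push_cast at *
    nlinarith
  obtain ⟨C, hC, hlowN⟩ := hlow N
  set E : ℕ → ℝ := fun n => ∑ x, (c x : ℝ) * monInv u x.1 x.2.1 n * f n ^ (x.2.2 : ℕ) with hE
  refine h.not_auxiliary_vanish hf hfb hirr hc0 ?_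
  set κ : ℝ := T + (|θ| + 1) with hκ
  have hκ1 : 0 ≤ κ := by positivity
  set C₁ : ℝ := ∑ x : Fin (N+1) × Fin (N+1) × Fin (N+1), |(c x : ℝ)| * κ ^ (x.2.2 : ℕ) with hC₁
  have hC₁0 : 0 ≤ C₁ := Finset.sum_nonneg fun x _ => by positivity
  have hsmall : Tendsto (fun n => C * C₁ ^ D * |E n / monInv u (2 * N * (D+1)) (N * (D+1)) n|)
      atTop (𝓝 0) := by
    have := ((hcO.trans_isLittleO (h.pow_isLittleO_monInv hweight)).tendsto_div_nhds_zero.abs).const_mul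
      (C * C₁ ^ D)
    simpa using this
  have hfsmall := (h.tendsto_zero_of_le_gap hfb).abs
  rw [abs_zero] at hfsmall
  filter_upwards [hν.eventually (hsmall.eventually_lt_const one_pos),
    hν.eventually (hfsmall.eventually_lt_const one_pos)] with i hi hfi
  by_contra hne
  set n := n₀ + 3 * i with hn
  have hEn : E n ≠ 0 := hne
  have hpn : θ = p i / u n + f n := hp i
  have hu0 := h.cast_ne n
  have hu1 := h.cast_ne (n+1)
  have hA := h.abs_pos n
  have hA' := h.abs_pos (n+1)
  let P : ℤ[X] := ∑ x : Fin (N+1) × Fin (N+1) × Fin (N+1),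
    Polynomial.C (c x * u n ^ (N - x.1) * u (n+1) ^ (N - x.2.1) * u n ^ (N - x.2.2)) *
      (Polynomial.C (u n) * X - Polynomial.C (p i)) ^ (x.2.2 : ℕ)
  have hPdeg : P.natDegree ≤ N := by
    refine natDegree_sum_le_of_forall_le _ _ fun x _ => ?_
    refine (natDegree_C_mul_le _ _).trans (natDegree_pow_le.trans ?_)
    have h1 : (Polynomial.C (u n) * X - Polynomial.C (p i)).natDegree ≤ 1 := by
      compute_degree
    calc (x.2.2 : ℕ) * _ ≤ (x.2.2 : ℕ) * 1 := Nat.mul_le_mul_left _ h1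
      _ ≤ N := by omega
  have hPval : aeval θ P = ((u n : ℝ) ^ (2 * N) * (u (n+1) : ℝ) ^ N) * E n := by
    simp only [P, map_sum, map_mul, map_pow, map_sub, aeval_X, hE, Finset.mul_sum,
      eq_intCast, map_intCast]
    refine Finset.sum_congr rfl fun x _ => ?_
    have hlin : (u n : ℝ) * θ - p i = u n * f n := by
      rw [hpn]
      field_simp
      ring
    have ha : (x.1 : ℕ) ≤ N := by omega
    have hb : (x.2.1 : ℕ) ≤ N := by omega
    have hd : (x.2.2 : ℕ) ≤ N := by omega
    rw [hlin, monInv, invSeq, invSeq, pow_sub₀ _ hu0 ha, pow_sub₀ _ hu1 hb, pow_sub₀ _ hu0 hd,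
      mul_pow, inv_pow, inv_pow]
    field_simp
    ring
  have hpi : |(p i : ℝ)| ≤ |(u n : ℝ)| * (|θ| + 1) := by
    have : (p i : ℝ) = u n * (θ - f n) := by
      rw [hpn]
      field_simp
      ring
    rw [this, abs_mul]
    gcongr
    exact (abs_sub _ _).trans (by linarith)
  have hPbound : ∀ z : ℂ, ‖z‖ ≤ T →
      ‖aeval z P‖ ≤ C₁ * (|(u n : ℝ)| ^ (2 * N) * |(u (n+1) : ℝ)| ^ N) := by
    intro z hz
    simp only [P, map_sum, map_mul, map_pow, map_sub, aeval_X,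
      eq_intCast, map_intCast]
    refine (norm_sum_le _ _).trans ?_
    rw [hC₁, Finset.sum_mul]
    refine Finset.sum_le_sum fun x _ => ?_
    simp only [norm_mul, norm_pow, Complex.norm_intCast]
    have hlin : ‖(u n : ℂ) * z - p i‖ ≤ |(u n : ℝ)| * κ := by
      refine (norm_sub_le _ _).trans ?_
      rw [norm_mul, Complex.norm_intCast, Complex.norm_intCast, hκ, mul_add]
      gcongr
    have hd : (x.2.2 : ℕ) ≤ N := by omega
    calc |(c x : ℝ)| * |(u n : ℝ)| ^ (N - x.1) * |(u (n+1) : ℝ)| ^ (N - x.2.1)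
          * |(u n : ℝ)| ^ (N - x.2.2) * ‖(u n : ℂ) * z - p i‖ ^ (x.2.2 : ℕ)
        ≤ |(c x : ℝ)| * |(u n : ℝ)| ^ N * |(u (n+1) : ℝ)| ^ N
          * |(u n : ℝ)| ^ (N - x.2.2) * (|(u n : ℝ)| * κ) ^ (x.2.2 : ℕ) := by
          gcongr
          · exact h.one_le_abs n
          · omega
          · exact h.one_le_abs (n+1)
          · omega
      _ = |(c x : ℝ)| * κ ^ (x.2.2 : ℕ) * (|(u n : ℝ)| ^ (2 * N) * |(u (n+1) : ℝ)| ^ N) := by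
          rw [pow_sub₀ _ hA.ne' hd, mul_pow]
          field_simp
          ring
  have hPne : aeval θ P ≠ 0 := by
    rw [hPval]
    exact mul_ne_zero (mul_ne_zero (pow_ne_zero _ hu0) (pow_ne_zero _ hu1)) hEn
  have hfinal := hlowN P hPdeg hPne _ hPbound
  refine absurd hi (not_lt.2 (hfinal.trans (le_of_eq ?_)))
  rw [hPval, monInv, invSeq, invSeq, abs_mul, abs_mul, abs_pow, abs_pow, abs_div, abs_mul, abs_pow,
    abs_pow, abs_inv, abs_inv, inv_pow, inv_pow, ← mul_inv, div_inv_eq_mul]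
  ring

end MarkoffGrowth

/-- Six times the sum of the increments `gapSeq` along an arithmetic progression of step `3`. -/
noncomputable def tailSum (u : ℕ → ℤ) (n : ℕ) : ℝ := 6 * ∑' j : ℕ, gapSeq u (n + 3 * j)

section TailSum

variable {u : ℕ → ℤ}

theorem abs_gapSeq_le_geometric (hq : ∀ n, |gapSeq u (n+3)| ≤ 4⁻¹ * |gapSeq u n|) (n j : ℕ) :
    |gapSeq u (n + 3 * j)| ≤ |gapSeq u n| * (4⁻¹ : ℝ) ^ j := by
  induction j with
  | zero => simp
  | succ j ih =>
    calc |gapSeq u (n + 3 * j + 3)| ≤ 4⁻¹ * |gapSeq u (n + 3 * j)| := hq _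
      _ ≤ 4⁻¹ * (|gapSeq u n| * (4⁻¹ : ℝ) ^ j) := by gcongr
      _ = |gapSeq u n| * (4⁻¹ : ℝ) ^ (j+1) := by ring

theorem hasSum_geometric_quarter (u : ℕ → ℤ) (n : ℕ) :
    HasSum (fun j : ℕ => |gapSeq u n| * (4⁻¹ : ℝ) ^ j) (|gapSeq u n| * (4 / 3)) := by
  have := (hasSum_geometric_of_lt_one (r := (4⁻¹ : ℝ)) (by norm_num) (by norm_num)).mul_left
    |gapSeq u n|
  norm_num at this ⊢
  exact this

theorem tailSum_eq (hq : ∀ n, |gapSeq u (n+3)| ≤ 4⁻¹ * |gapSeq u n|) (n : ℕ) :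
    tailSum u n = 6 * gapSeq u n + tailSum u (n+3) := by
  have hs : Summable fun j : ℕ => gapSeq u (n + 3 * j) :=
    Summable.of_norm_bounded (hasSum_geometric_quarter u n).summable
      fun j => abs_gapSeq_le_geometric hq n j
  rw [tailSum, hs.tsum_eq_zero_add, mul_add, tailSum]
  simp only [mul_zero, add_zero]
  congr 3
  ext j
  congr 1
  ring

theorem abs_tailSum_le (hq : ∀ n, |gapSeq u (n+3)| ≤ 4⁻¹ * |gapSeq u n|) (n : ℕ) :
    |tailSum u n| ≤ 8 * |gapSeq u n| := by
  have := tsum_of_norm_bounded (hasSum_geometric_quarter u n)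
    fun j => (Real.norm_eq_abs _).trans_le (abs_gapSeq_le_geometric hq n j)
  rw [tailSum, abs_mul, ← Real.norm_eq_abs (∑' _, _), abs_of_pos (by norm_num)]
  linarith

theorem le_abs_tailSum (hq : ∀ n, |gapSeq u (n+3)| ≤ 4⁻¹ * |gapSeq u n|) (n : ℕ) :
    4 * |gapSeq u n| ≤ |tailSum u n| := by
  have h1 := abs_tailSum_le hq (n+3)
  have h2 := hq n
  have h3 : |6 * gapSeq u n| ≤ |tailSum u n| + |tailSum u (n+3)| := by
    rw [eq_sub_iff_add_eq.2 (tailSum_eq hq n).symm]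
    exact abs_sub _ _
  rw [abs_mul, abs_of_pos (by norm_num : (0 : ℝ) < 6)] at h3
  linarith

end TailSum

namespace MarkoffGrowth

variable {u : ℕ → ℤ}

theorem gapSeq_ne_zero (h : MarkoffGrowth u) (n : ℕ) : gapSeq u n ≠ 0 :=
  div_ne_zero (h.cast_ne _) (mul_ne_zero (h.cast_ne _) (h.cast_ne _))

theorem abs_le_three_mul (h : MarkoffGrowth u) (n : ℕ) :
    |(u (n+2) : ℝ)| ≤ 3 * (|(u n : ℝ)| * |(u (n+1) : ℝ)|) := by
  have hm : (u n : ℝ) ^ 2 + u (n+1) ^ 2 + u (n+2) ^ 2 = 3 * u n * u (n+1) * u (n+2) := by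
    exact_mod_cast h.markoff n
  have h2 := h.abs_pos (n+2)
  refine le_of_mul_le_mul_right ?_ h2
  calc |(u (n+2) : ℝ)| * |(u (n+2) : ℝ)| = (u (n+2) : ℝ) ^ 2 := by rw [← sq, sq_abs]
    _ ≤ 3 * u n * u (n+1) * u (n+2) := by nlinarith [sq_nonneg (u n : ℝ), sq_nonneg (u (n+1) : ℝ)]
    _ ≤ |3 * (u n : ℝ) * u (n+1) * u (n+2)| := le_abs_self _
    _ = _ := by
      rw [abs_mul, abs_mul, abs_mul, abs_of_pos (by norm_num : (0 : ℝ) < 3)]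
      ring

theorem le_abs_gapSeq (h : MarkoffGrowth u) (n : ℕ) :
    1 / (3 * (|(u n : ℝ)| * |(u (n+2) : ℝ)|)) ≤ |gapSeq u n| := by
  have h0 := h.abs_pos n
  have h2 := h.abs_pos (n+2)
  have h3 := h.abs_pos (n+3)
  rw [gapSeq, abs_div, abs_mul, div_le_div_iff₀ (by positivity) (by positivity)]
  have := mul_le_mul_of_nonneg_left (h.abs_le_three_mul (n+1)) h0.le
  linarith

theorem exists_abs_gapSeq_le (h : MarkoffGrowth u) :
    ∃ C : ℝ, 0 < C ∧ ∀ n, |gapSeq u n| ≤ C / (|(u n : ℝ)| * |(u (n+2) : ℝ)|) := by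
  obtain ⟨C, hC, hCu⟩ := h.exists_mul_le
  refine ⟨C, hC, fun n => ?_⟩
  have h0 := h.abs_pos n
  have h2 := h.abs_pos (n+2)
  have h3 := h.abs_pos (n+3)
  rw [gapSeq, abs_div, abs_mul, div_le_div_iff₀ (by positivity) (by positivity)]
  have := mul_le_mul_of_nonneg_left (hCu (n+1)) h0.le
  linarith

theorem eventually_gapSeq_le (h : MarkoffGrowth u) :
    ∀ᶠ n in atTop, |gapSeq u (n+3)| ≤ 4⁻¹ * |gapSeq u n| := by
  obtain ⟨C, hC, hCu⟩ := h.exists_mul_le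
  obtain ⟨C', hC', hG⟩ := h.exists_abs_gapSeq_le
  obtain ⟨N, hN⟩ := eventually_atTop.1
    (h.tendsto_abs.eventually_ge_atTop (C * (12 * C' + 1)))
  have hgrow : ∀ n ≥ N, (12 * C' + 1) * |(u n : ℝ)| ≤ |(u (n+2) : ℝ)| := fun n hn => by
    have h1 := hN (n+1) (by omega)
    have h2 := hCu n
    have h0 := h.abs_pos n
    refine le_of_mul_le_mul_left ?_ hC
    nlinarith
  have hmono : ∀ n ≥ N, |(u (n+1) : ℝ)| ≤ |(u (n+2) : ℝ)| := fun n hn => by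
    have h1 := hN n hn
    have h2 := hCu n
    have h0 := h.abs_pos (n+1)
    refine le_of_mul_le_mul_left ?_ hC
    nlinarith [mul_pos (mul_pos hC hC') h0]
  filter_upwards [eventually_ge_atTop N] with n hn
  refine (hG (n+3)).trans (le_trans ?_ (mul_le_mul_of_nonneg_left (h.le_abs_gapSeq n) (by norm_num)))
  have h0 := h.abs_pos n
  have h2 := h.abs_pos (n+2)
  have h3 := h.abs_pos (n+3)
  have h5 := h.abs_pos (n+5)
  have e1 : 12 * C' * |(u n : ℝ)| ≤ |(u (n+3) : ℝ)| := by
    linarith [hgrow n hn, hmono (n+1) (by omega)]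
  have e2 : |(u (n+2) : ℝ)| ≤ |(u (n+5) : ℝ)| :=
    (hmono (n+1) (by omega)).trans ((hmono (n+2) (by omega)).trans (hmono (n+3) (by omega)))
  have e3 : 12 * C' * |(u n : ℝ)| * |(u (n+2) : ℝ)| ≤ |(u (n+3) : ℝ)| * |(u (n+5) : ℝ)| := by
    gcongr
  rw [show 4⁻¹ * (1 / (3 * (|(u n : ℝ)| * |(u (n+2) : ℝ)|)))
    = 1 / (12 * (|(u n : ℝ)| * |(u (n+2) : ℝ)|)) by field_simp; norm_num,
    div_le_div_iff₀ (by positivity) (by positivity)]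
  linarith

/-- The increments are of the order of the power `-γ-2` of `u n`. -/
theorem exists_gapSeq_bounds (h : MarkoffGrowth u) :
    ∃ c C : ℝ, 0 < c ∧ 0 < C ∧ ∀ n, c * |(u n : ℝ)| ^ (-gold - 2) ≤ |gapSeq u n| ∧
      |gapSeq u n| ≤ C * |(u n : ℝ)| ^ (-gold - 2) := by
  obtain ⟨c, C, hc, hC, hcC⟩ := h.growth
  obtain ⟨C₁, hC₁, hmul⟩ := h.exists_mul_le
  obtain ⟨C₂, hC₂, hG⟩ := h.exists_abs_gapSeq_le
  refine ⟨1 / (9 * C), C₂ * C₁ / c, by positivity, by positivity, fun n => ?_⟩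
  have h0 := h.abs_pos n
  have h2 := h.abs_pos (n+2)
  have hp := Real.rpow_pos_of_pos h0 gold
  have e : |(u n : ℝ)| ^ (-gold - 2) = 1 / (|(u n : ℝ)| ^ gold * |(u n : ℝ)| ^ 2) := by
    rw [Real.rpow_sub h0, Real.rpow_neg h0.le, Real.rpow_two]
    field_simp
  rw [e]
  constructor
  · refine le_trans ?_ (h.le_abs_gapSeq n)
    rw [← mul_div_assoc, mul_one, div_div, div_le_div_iff₀ (by positivity) (by positivity)]
    have h3 := (h.abs_le_three_mul n).trans
      (mul_le_mul_of_nonneg_left (mul_le_mul_of_nonneg_left (hcC n).2 h0.le) (by norm_num))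
    have := mul_le_mul_of_nonneg_left h3 h0.le
    linarith
  · refine (hG n).trans ?_
    rw [← mul_div_assoc, mul_one, div_div, div_le_div_iff₀ (by positivity) (by positivity)]
    have h3 := (mul_le_mul_of_nonneg_left (hcC n).1 h0.le).trans (hmul n)
    have := mul_le_mul_of_nonneg_left h3 (mul_nonneg hC₂.le h0.le)
    linarith

end MarkoffGrowth

theorem ratHeight_div_le (p : ℤ) {q : ℤ} (hq : q ≠ 0) :
    ratHeight ((p : ℚ) / q) ≤ |(p : ℝ)| + |(q : ℝ)| := by
  rw [← Rat.divInt_eq_div]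
  have hden : ((Rat.divInt p q).den : ℝ) ≤ |(q : ℝ)| := by
    have h1 : (((Rat.divInt p q).den : ℤ)) ≤ |q| :=
      Int.le_of_dvd (abs_pos.2 hq) ((dvd_abs _ _).2 (Rat.den_dvd p q))
    exact_mod_cast h1
  have hnum : |((Rat.divInt p q).num : ℝ)| ≤ |(p : ℝ)| := by
    rcases eq_or_ne p 0 with rfl | hp
    · simp
    · have h1 : |(Rat.divInt p q).num| ≤ |p| :=
        Int.le_of_dvd (abs_pos.2 hp) ((abs_dvd_abs _ _).2 (Rat.num_dvd p hq))
      exact_mod_cast h1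
  exact max_le (hnum.trans (le_add_of_nonneg_right (abs_nonneg _)))
    (hden.trans (le_add_of_nonneg_left (abs_nonneg _)))

theorem den_le_ratHeight (α : ℚ) : (α.den : ℝ) ≤ ratHeight α := le_max_right _ _

theorem one_le_den (α : ℚ) : (1 : ℝ) ≤ α.den := by exact_mod_cast α.pos

theorem ratHeight_pos (α : ℚ) : 0 < ratHeight α :=
  one_pos.trans_le ((one_le_den α).trans (den_le_ratHeight α))

namespace MarkoffGrowth

variable {u : ℕ → ℤ}

theorem exists_infinite_approx (h : MarkoffGrowth u) {F : ℕ → ℝ} {C : ℝ} (hC : 0 < C)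
    (hF : ∀ n, |F n| ≤ C * |(u n : ℝ)| ^ (-gold - 2)) {n₀ : ℕ} {δ : ℝ} (hirr : Irrational δ)
    (hδ : ∀ i, ∃ p : ℤ, δ = p / u (n₀ + 3 * i) + F (n₀ + 3 * i)) :
    ∃ c₄ : ℝ, 0 < c₄ ∧ {α : ℚ | |δ - (α : ℝ)| ≤ c₄ * ratHeight α ^ (-gold - 2)}.Infinite := by
  choose p hp using hδ
  have hγ := one_lt_gold
  have hν : Tendsto (fun i => n₀ + 3 * i) atTop atTop :=
    tendsto_atTop_mono (fun i => show i ≤ n₀ + 3 * i by omega) tendsto_id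
  have hF1 : ∀ n, |F n| ≤ C := fun n => (hF n).trans
    (mul_le_of_le_one_right hC.le (Real.rpow_le_one_of_one_le_of_nonpos (h.one_le_abs n)
      (by linarith)))
  obtain ⟨K, hK⟩ : ∃ K, K = |δ| + C + 1 := ⟨_, rfl⟩
  have hK0 : 0 < K := by rw [hK]; positivity
  let α : ℕ → ℚ := fun i => (p i : ℚ) / u (n₀ + 3 * i)
  have hα : ∀ i, δ - (α i : ℝ) = F (n₀ + 3 * i) := fun i => by
    simp only [α, Rat.cast_div, Rat.cast_intCast]
    linear_combination hp i
  have hH : ∀ i, ratHeight (α i) ≤ K * |(u (n₀ + 3 * i) : ℝ)| := fun i => by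
    have hpi : |(p i : ℝ)| ≤ (|δ| + C) * |(u (n₀ + 3 * i) : ℝ)| := by
      have hu := h.cast_ne (n₀ + 3 * i)
      have : (p i : ℝ) = (δ - F (n₀ + 3 * i)) * u (n₀ + 3 * i) := by
        rw [sub_eq_of_eq_add (hp i), div_mul_cancel₀ _ hu]
      rw [this, abs_mul]
      gcongr
      exact (abs_sub _ _).trans (by linarith [hF1 (n₀ + 3 * i)])
    have := ratHeight_div_le (p i) (h.ne_zero (n₀ + 3 * i))
    rw [hK]
    linarith
  have hmem : ∀ i, α i ∈ {α : ℚ | |δ - (α : ℝ)| ≤ C * K ^ (gold + 2) * ratHeight α ^ (-gold - 2)} := by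
    intro i
    have hA := h.abs_pos (n₀ + 3 * i)
    rw [Set.mem_ofPred_eq, hα i]
    refine (hF _).trans ?_
    calc C * |(u (n₀ + 3 * i) : ℝ)| ^ (-gold - 2)
        = C * K ^ (gold + 2) * (K * |(u (n₀ + 3 * i) : ℝ)|) ^ (-gold - 2) := by
          rw [Real.mul_rpow hK0.le hA.le, show -gold - 2 = -(gold + 2) by ring,
            Real.rpow_neg hK0.le]
          have := (Real.rpow_pos_of_pos hK0 (gold + 2)).ne'
          field_simp
      _ ≤ _ := by
          gcongr ?_ * ?_
          exact Real.rpow_le_rpow_of_nonpos (ratHeight_pos _) (hH i) (by linarith)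
  refine ⟨C * K ^ (gold + 2), by positivity, fun hfin => ?_⟩
  have hlim0 : Tendsto F atTop (𝓝 0) := by
    refine squeeze_zero_norm hF ?_
    have := ((tendsto_rpow_neg_atTop (y := gold + 2) (by linarith)).comp h.tendsto_abs).const_mul C
    rw [mul_zero] at this
    refine this.congr fun n => ?_
    rw [Function.comp_apply, neg_add, sub_eq_add_neg]
  have hlim : Tendsto (fun i => (α i : ℝ)) atTop (𝓝 δ) := by
    have := (hlim0.comp hν).const_sub δ
    rw [sub_zero] at this
    refine this.congr fun i => ?_
    rw [Function.comp_apply, ← hα i, sub_sub_cancel]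
  obtain ⟨β, -, hβ⟩ := (hfin.image ((↑) : ℚ → ℝ)).isClosed.mem_of_tendsto hlim
    (Eventually.of_forall fun i => Set.mem_image_of_mem _ (hmem i))
  exact hirr ⟨β, hβ⟩

theorem dvd_zero_term (hgcd : ∀ k d, d ∣ u (k+1) → d ∣ u (k+2) → d ∣ u k) {d : ℤ} (n : ℕ)
    (h0 : d ∣ u n) (h1 : d ∣ u (n+1)) : d ∣ u 0 := by
  induction n with
  | zero => exact h0
  | succ n ih => exact ih (hgcd n d h0 h1) h0

theorem exists_lower_approx (h : MarkoffGrowth u)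
    (hgcd : ∀ k d, d ∣ u (k+1) → d ∣ u (k+2) → d ∣ u k) {F : ℕ → ℝ} {a : ℤ} (ha : a ≠ 0)
    (hF : ∀ n, F n = 6 * a * gapSeq u n + F (n+3)) {c C₁ : ℝ} (hc : 0 < c) (hC₁ : 0 < C₁)
    (hlow : ∀ n, c * |(u n : ℝ)| ^ (-gold - 2) ≤ |F n|)
    (hup : ∀ n, |F n| ≤ C₁ / (|(u n : ℝ)| * |(u (n+2) : ℝ)|)) {n₀ : ℕ} {δ : ℝ}
    (hδ : ∀ i, ∃ p : ℤ, δ = p / u (n₀ + 3 * i) + F (n₀ + 3 * i)) :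
    ∃ c₅ : ℝ, 0 < c₅ ∧ ∀ α : ℚ, ¬ (|δ - (α : ℝ)| ≤ c₅ * ratHeight α ^ (-gold - 2)) := by
  choose p hp using hδ
  have hγ := one_lt_gold
  obtain ⟨_, B, _, hB, hgrow⟩ := h.growth
  have hν : Tendsto (fun i => n₀ + 3 * i + 2) atTop atTop :=
    tendsto_atTop_mono (fun i => show i ≤ n₀ + 3 * i + 2 by omega) tendsto_id
  obtain ⟨K, hK⟩ : ∃ K : ℝ, K = 6 * |(a : ℝ)| * |(u 0 : ℝ)| := ⟨_, rfl⟩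
  obtain ⟨L, hL⟩ : ∃ L : ℝ, L = |(u n₀ : ℝ)| + B * (2 * C₁) ^ gold := ⟨_, rfl⟩
  have hu0 := h.abs_pos 0
  have ha0 : 0 < |(a : ℝ)| := _root_.abs_pos.2 (Int.cast_ne_zero.2 ha)
  have hK0 : 0 < K := by rw [hK]; positivity
  have hL0 : 0 < L := by rw [hL]; positivity
  obtain ⟨c', hc'⟩ : ∃ c', c' = min (1 / (2 * L)) (c * K ^ (-gold - 2)) := ⟨_, rfl⟩
  have hc'0 : 0 < c' := by
    rw [hc']
    have := Real.rpow_pos_of_pos hK0 (-gold - 2)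
    positivity
  suffices hmain : ∀ α : ℚ, c' * (α.den : ℝ) ^ (-gold - 2) ≤ |δ - (α : ℝ)| by
    refine ⟨c' / 2, by positivity, fun α hα => ?_⟩
    have hp0 := Real.rpow_pos_of_pos (ratHeight_pos α) (-gold - 2)
    have h1 : ratHeight α ^ (-gold - 2) ≤ (α.den : ℝ) ^ (-gold - 2) :=
      Real.rpow_le_rpow_of_nonpos (one_pos.trans_le (one_le_den α)) (den_le_ratHeight α)
        (by linarith)
    have h2 := (mul_le_mul_of_nonneg_left h1 hc'0.le).trans ((hmain α).trans hα)
    nlinarith [mul_pos hc'0 hp0]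
  intro α
  obtain ⟨q, hq⟩ : ∃ q : ℝ, q = α.den := ⟨_, rfl⟩
  have hq1 : 1 ≤ q := hq ▸ one_le_den α
  have hq0 : 0 < q := one_pos.trans_le hq1
  have hαq : (α : ℝ) = α.num / q := by rw [hq]; exact_mod_cast (Rat.num_div_den α).symm
  rw [← hq]
  have hex : ∃ i, 2 * C₁ * q ≤ |(u (n₀ + 3 * i + 2) : ℝ)| :=
    ((h.tendsto_abs.comp hν).eventually_ge_atTop _).exists
  classical
  obtain ⟨i, hi, hmin⟩ : ∃ i, 2 * C₁ * q ≤ |(u (n₀ + 3 * i + 2) : ℝ)| ∧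
      ∀ j < i, |(u (n₀ + 3 * j + 2) : ℝ)| < 2 * C₁ * q :=
    ⟨Nat.find hex, Nat.find_spec hex, fun j hj => not_le.1 (Nat.find_min hex hj)⟩
  have hpq : 1 ≤ q ^ gold := Real.one_le_rpow hq1 (by linarith)
  have hAL : |(u (n₀ + 3 * i) : ℝ)| ≤ L * q ^ gold := by
    have e1 : 0 ≤ B * (2 * C₁) ^ gold := by positivity
    rcases i with _ | j
    · rw [hL]
      nlinarith [abs_nonneg (u n₀ : ℝ), show |(u (n₀ + 3 * 0) : ℝ)| = |(u n₀ : ℝ)| by simp]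
    · have h1 := hmin j (Nat.lt_succ_self j)
      calc |(u (n₀ + 3 * (j+1)) : ℝ)| = |(u (n₀ + 3 * j + 2 + 1) : ℝ)| := by ring_nf
        _ ≤ B * |(u (n₀ + 3 * j + 2) : ℝ)| ^ gold := (hgrow _).2
        _ ≤ B * (2 * C₁ * q) ^ gold := by gcongr
        _ = B * (2 * C₁) ^ gold * q ^ gold := by
          rw [Real.mul_rpow (by positivity) hq0.le, mul_assoc]
        _ ≤ L * q ^ gold := by
          gcongr
          rw [hL]
          linarith [abs_nonneg (u n₀ : ℝ)]
  have hpi := hp i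
  have hpi' := hp (i+1)
  have hFn := hF (n₀ + 3 * i)
  rw [show n₀ + 3 * (i+1) = n₀ + 3 * i + 3 by ring] at hpi'
  generalize n₀ + 3 * i = n at *
  have hA := h.abs_pos n
  have hun := h.cast_ne n
  by_cases hcase : α.num * u n - p i * α.den = 0
  · have hcase' : (α.num : ℝ) * u n = p i * q := by
      rw [hq]
      exact_mod_cast sub_eq_zero.1 hcase
    have hαF : δ - α = F n := by
      rw [hαq, hpi]
      field_simp
      linear_combination -hcase'
    have hdvd : u n ∣ 6 * a * α.den * u (n+1) := by
      refine ⟨α.den * p (i+1) - α.num * u (n+3), ?_⟩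
      have hu3 := h.cast_ne (n+3)
      have h1 : (p (i+1) : ℝ) * u n - p i * u (n+3) = 6 * a * u (n+1) := by
        have : (p (i+1) : ℝ) / u (n+3) - p i / u n = 6 * a * (u (n+1) / (u n * u (n+3))) := by
          rw [← gapSeq]
          linear_combination hFn - hpi' + hpi
        field_simp at this
        linear_combination this
      have h2 : (6 * a * q * u (n+1) : ℝ) = u n * (q * p (i+1) - α.num * u (n+3)) := by
        linear_combination -q * h1 + u (n+3) * hcase'
      rw [hq] at h2
      exact_mod_cast h2
    have hdvd0 : u n ∣ 6 * a * α.den * u 0 := by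
      have hg : u n ∣ 6 * a * α.den * (Int.gcd (u n) (u (n+1)) : ℤ) := by
        rw [Int.gcd_eq_gcd_ab, mul_add, ← mul_assoc, ← mul_assoc]
        exact dvd_add (Dvd.dvd.mul_right (dvd_mul_left _ _) _) (hdvd.mul_right _)
      exact hg.trans (mul_dvd_mul_left _
        (dvd_zero_term hgcd n (Int.gcd_dvd_left ..) (Int.gcd_dvd_right ..)))
    have hAK : |(u n : ℝ)| ≤ K * q := by
      have h1 : |u n| ≤ |6 * a * α.den * u 0| := by
        refine Int.le_of_dvd (_root_.abs_pos.2 ?_) ((abs_dvd_abs _ _).2 hdvd0)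
        have := h.ne_zero 0
        have := α.den_nz
        positivity
      have h2 : |(u n : ℝ)| ≤ |6 * (a : ℝ) * α.den * u 0| := by exact_mod_cast h1
      rw [← hq, abs_mul, abs_mul, abs_mul, abs_of_pos hq0,
        abs_of_pos (by norm_num : (0 : ℝ) < 6)] at h2
      rw [hK]
      linarith
    rw [hαF]
    refine le_trans ?_ (hlow n)
    calc c' * q ^ (-gold - 2) ≤ c * K ^ (-gold - 2) * q ^ (-gold - 2) := by
          gcongr
          rw [hc']
          exact min_le_right _ _
      _ = c * (K * q) ^ (-gold - 2) := by rw [Real.mul_rpow hK0.le hq0.le, mul_assoc]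
      _ ≤ _ := by
          gcongr ?_ * ?_
          exact Real.rpow_le_rpow_of_nonpos hA hAK (by linarith)
  · have h1 : 1 ≤ |(α.num : ℝ) * u n - p i * q| := by
      rw [hq]
      exact_mod_cast Int.one_le_abs hcase
    have hFle : |F n| ≤ 1 / (2 * q * |(u n : ℝ)|) := by
      refine (hup n).trans ?_
      rw [div_le_div_iff₀ (mul_pos hA (h.abs_pos _)) (by positivity)]
      nlinarith
    have h2 : 1 / (q * |(u n : ℝ)|) ≤ |(α : ℝ) - p i / u n| := by
      have : (α : ℝ) - p i / u n = (α.num * u n - p i * q) / (q * u n) := by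
        rw [hαq]
        field_simp
      rw [this, abs_div, abs_mul, abs_of_pos hq0]
      gcongr
    have h3 : |(α : ℝ) - p i / u n| ≤ |F n| + |δ - α| := by
      have : (α : ℝ) - p i / u n = F n - (δ - α) := by linear_combination hpi
      rw [this]
      exact abs_sub _ _
    have h4 : 1 / (q * |(u n : ℝ)|) = 2 * (1 / (2 * q * |(u n : ℝ)|)) := by
      field_simp
    have h5 : 1 / (2 * q * |(u n : ℝ)|) ≤ |δ - α| := by linarith
    refine le_trans ?_ h5
    calc c' * q ^ (-gold - 2) ≤ 1 / (2 * L) * q ^ (-gold - 1) := by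
          refine mul_le_mul (hc' ▸ min_le_left _ _)
            (Real.rpow_le_rpow_of_exponent_le hq1 (by linarith)) (by positivity) (by positivity)
      _ = 1 / (2 * q * (L * q ^ gold)) := by
          rw [Real.rpow_sub hq0, Real.rpow_neg hq0.le, Real.rpow_one]
          field_simp
      _ ≤ _ := by gcongr

end MarkoffGrowth

theorem distInt_eq_norm (y : ℝ) : distInt y = ‖(y : UnitAddCircle)‖ := (UnitAddCircle.norm_eq).symm

theorem continuous_distInt : Continuous distInt := by
  rw [funext distInt_eq_norm]
  exact continuous_norm.comp (AddCircle.continuous_mk' 1)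

theorem distInt_intCast_add (z : ℤ) (y : ℝ) : distInt (z + y) = distInt y := by
  rw [distInt, distInt, round_intCast_add]
  push_cast
  ring_nf

theorem exists_distInt_eq (y : ℝ) : ∃ ε z : ℤ, ε ≠ 0 ∧ distInt y = ε * y + z := by
  rcases abs_choice (y - round y) with h | h
  · exact ⟨1, -round y, one_ne_zero, by rw [distInt, h]; push_cast; ring⟩
  · exact ⟨-1, round y, by norm_num, by rw [distInt, h]; push_cast; ring⟩

namespace EntryRelations

variable {u v w : ℕ → ℤ}

/-- The numerator of an approximation of `w k * ξ` with denominator `u (k+2)`. -/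
def numer (u v w : ℕ → ℤ) (k : ℕ) : ℤ :=
  w k * v (k+2) + (-1)^k * w (k+1) + 6 * v (k+1) + 9 * (-1)^k * u (k+1)

/-- The approximation of `(-1)^k * w k * ξ` with denominator `u (k+2)`. -/
noncomputable def signedApprox (u v w : ℕ → ℤ) (k : ℕ) : ℝ :=
  (-1)^k * (numer u v w k / u (k+2))

theorem signedApprox_add_three (h : EntryRelations u v w) (hu : ∀ n, u n ≠ 0) (k : ℕ) :
    ∃ z : ℤ, signedApprox u v w (k+3) = signedApprox u v w k + 6 * gapSeq u (k+2) + z := by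
  refine ⟨-(-1)^k * (3 * (v (k+1) * w (k+2) + (-1)^k * w k)), ?_⟩
  have h2 : (u (k+2) : ℝ) ≠ 0 := Int.cast_ne_zero.2 (hu _)
  have h5 : (u (k+5) : ℝ) ≠ 0 := Int.cast_ne_zero.2 (hu _)
  have hs : ((-1 : ℝ)^k) ^ 2 = 1 := by rw [← pow_mul, mul_comm, pow_mul]; norm_num
  have hrec := congrArg (Int.cast : ℤ → ℝ) (h.numerator_rec k)
  have e : ((numer u v w (k+3) : ℤ) : ℝ) = w (k+3) * v (k+5) - (-1)^k * w (k+4) + 6 * v (k+4)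
      - 9 * (-1)^k * u (k+4) := by
    rw [numer]
    push_cast
    ring
  have e' : ((numer u v w k : ℤ) : ℝ) = w k * v (k+2) + (-1)^k * w (k+1) + 6 * v (k+1)
      + 9 * (-1)^k * u (k+1) := by
    rw [numer]
    push_cast
    ring
  push_cast at hrec
  rw [← e, ← e'] at hrec
  simp only [signedApprox, gapSeq, show k + 3 + 2 = k + 5 from rfl, show k + 2 + 1 = k + 3 from rfl,
    pow_add]
  field_simp
  push_cast
  linear_combination -(-1)^k * hrec + 6 * u (k+3) * hs

theorem exists_eq_signedApprox_add_tailSum (h : EntryRelations u v w) (hu : ∀ n, u n ≠ 0)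
    (hq : ∀ n, |gapSeq u (n+3)| ≤ 4⁻¹ * |gapSeq u n|) (k i : ℕ) :
    ∃ z : ℤ, signedApprox u v w k + tailSum u (k+2) =
      signedApprox u v w (k + 3 * i) + tailSum u (k + 2 + 3 * i) + z := by
  induction i with
  | zero => exact ⟨0, by simp⟩
  | succ i ih =>
    obtain ⟨z, hz⟩ := ih
    obtain ⟨z', hz'⟩ := h.signedApprox_add_three hu (k + 3 * i)
    have ht := tailSum_eq hq (k + 2 + 3 * i)
    refine ⟨z - z', ?_⟩
    rw [hz, show k + 3 * (i+1) = k + 3 * i + 3 by ring,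
      show k + 2 + 3 * (i+1) = k + 2 + 3 * i + 3 by ring, hz', ht,
      show k + 3 * i + 2 = k + 2 + 3 * i by ring]
    push_cast
    ring

theorem exists_eq_div_add_tailSum (h : EntryRelations u v w) (hu : ∀ n, u n ≠ 0)
    (hq : ∀ n, |gapSeq u (n+3)| ≤ 4⁻¹ * |gapSeq u n|) (k i : ℕ) :
    ∃ p : ℤ, signedApprox u v w k + tailSum u (k+2) =
      p / u (k + 2 + 3 * i) + tailSum u (k + 2 + 3 * i) := by
  obtain ⟨z, hz⟩ := h.exists_eq_signedApprox_add_tailSum hu hq k i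
  refine ⟨(-1) ^ (k + 3 * i) * numer u v w (k + 3 * i) + z * u (k + 2 + 3 * i), ?_⟩
  have hne : (u (k + 2 + 3 * i) : ℝ) ≠ 0 := Int.cast_ne_zero.2 (hu _)
  rw [hz, signedApprox, show k + 3 * i + 2 = k + 2 + 3 * i by ring]
  push_cast
  field_simp
  ring

theorem dvd_of_dvd_succ (h : EntryRelations u v w) (k : ℕ) (d : ℤ) (h1 : d ∣ u (k+1))
    (h2 : d ∣ u (k+2)) : d ∣ u k := by
  have hs : ((-1 : ℤ)^k) ^ 2 = 1 := by rw [← pow_mul, mul_comm, pow_mul]; norm_num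
  have e : u k = u (k+1) * ((-1)^k * v (k+2)) - u (k+2) * ((-1)^k * v (k+1)) := by
    linear_combination -(-1)^k * h.succ_uv k - u k * hs
  rw [e]
  exact dvd_sub (h1.mul_right _) (h2.mul_right _)

end EntryRelations

namespace MarkoffGrowth

variable {u v w : ℕ → ℤ} {ξ : ℝ}

theorem tendsto_div_abs (h : MarkoffGrowth u) (C : ℝ) :
    Tendsto (fun k => C / |(u k : ℝ)|) atTop (𝓝 0) :=
  h.tendsto_abs.const_div_atTop C

theorem tendsto_succ_div (h : MarkoffGrowth u) (C : ℝ) :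
    Tendsto (fun k => C * |(u (k+1) : ℝ)| / |(u (k+2) : ℝ)|) atTop (𝓝 0) := by
  obtain ⟨K, hK, hmul⟩ := h.exists_mul_le
  refine squeeze_zero_norm (fun k => ?_) (h.tendsto_div_abs (|C| * K))
  have h0 := h.abs_pos k
  have h2 := h.abs_pos (k+2)
  rw [Real.norm_eq_abs, abs_div, abs_mul, abs_abs, abs_abs, div_le_div_iff₀ h2 h0]
  nlinarith [mul_le_mul_of_nonneg_left (hmul k) (abs_nonneg C)]

theorem tendsto_mul_sub_approx (h : MarkoffGrowth u) {C : ℝ} (hC : 0 < C)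
    (happ : ∀ k, |(u k : ℝ) * ξ - v k| ≤ C / |(u k : ℝ)| ∧ |(v k : ℝ)| ≤ C * |(u k : ℝ)| ∧
      |(w k : ℝ)| ≤ C * |(u k : ℝ)|) :
    Tendsto (fun k => w k * ξ - (EntryRelations.numer u v w k : ℝ) / u (k+2)) atTop (𝓝 0) := by
  obtain ⟨K, hK, hmul⟩ := h.exists_mul_le
  have hlim : Tendsto (fun k => C * (C * K) / |(u (k+1) : ℝ)|
      + (7 * C + 9) * |(u (k+1) : ℝ)| / |(u (k+2) : ℝ)|) atTop (𝓝 0) := by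
    have := ((tendsto_add_atTop_iff_nat 1).2 (h.tendsto_div_abs (C * (C * K)))).add
      (h.tendsto_succ_div (7 * C + 9))
    rwa [add_zero] at this
  refine squeeze_zero_norm (fun k => ?_) hlim
  have h0 := h.abs_pos k
  have h1 := h.abs_pos (k+1)
  have h2 := h.abs_pos (k+2)
  have hne := h.cast_ne (k+2)
  have hσ : |(-1 : ℝ) ^ k| = 1 := by simp
  have e : w k * ξ - (EntryRelations.numer u v w k : ℝ) / u (k+2)
      = w k * (u (k+2) * ξ - v (k+2)) / u (k+2)
        - ((-1)^k * w (k+1) + 6 * v (k+1) + 9 * (-1)^k * u (k+1)) / u (k+2) := by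
    rw [EntryRelations.numer]
    push_cast
    field_simp
    ring
  rw [e, Real.norm_eq_abs]
  refine (abs_sub _ _).trans (add_le_add ?_ ?_)
  · rw [abs_div, abs_mul]
    calc |(w k : ℝ)| * |u (k+2) * ξ - v (k+2)| / |(u (k+2) : ℝ)|
        ≤ C * |(u k : ℝ)| * C / |(u (k+2) : ℝ)| := by
          gcongr
          · exact (happ k).2.2
          · exact (happ (k+2)).1.trans (div_le_self hC.le (h.one_le_abs _))
      _ ≤ C * (C * K) / |(u (k+1) : ℝ)| := by
          rw [div_le_div_iff₀ h2 h1]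
          nlinarith [mul_le_mul_of_nonneg_left (hmul k) (mul_pos hC hC).le]
  · rw [abs_div]
    gcongr
    refine (abs_add_three _ _ _).trans ?_
    rw [abs_mul, abs_mul, abs_mul, abs_mul, hσ, abs_of_pos (by norm_num : (0 : ℝ) < 6),
      abs_of_pos (by norm_num : (0 : ℝ) < 9)]
    linarith [(happ (k+1)).2.1, (happ (k+1)).2.2]

theorem exists_tendsto_mul_aeval (h : MarkoffGrowth u) {C : ℝ} (hC : 0 < C)
    (happ : ∀ k, |(u k : ℝ) * ξ - v k| ≤ C / |(u k : ℝ)| ∧ |(v k : ℝ)| ≤ C * |(u k : ℝ)| ∧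
      |(w k : ℝ)| ≤ C * |(u k : ℝ)|)
    (happ' : ∀ k, |(v k : ℝ) * ξ - w k| ≤ C / |(u k : ℝ)|) {R : ℤ[X]} (hR : R.natDegree = 3) :
    ∃ z : ℕ → ℤ, Tendsto (fun k => u k * aeval ξ R - z k
      - R.coeff 3 * ((EntryRelations.numer u v w k : ℝ) / u (k+2))) atTop (𝓝 0) := by
  refine ⟨fun k => R.coeff 0 * u k + R.coeff 1 * v k + R.coeff 2 * w k, ?_⟩
  have h1 : Tendsto (fun k => (u k : ℝ) * ξ - v k) atTop (𝓝 0) :=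
    squeeze_zero_norm (fun k => (happ k).1) (h.tendsto_div_abs C)
  have h2 : Tendsto (fun k => (v k : ℝ) * ξ - w k) atTop (𝓝 0) :=
    squeeze_zero_norm happ' (h.tendsto_div_abs C)
  have h3 := h.tendsto_mul_sub_approx hC happ
  have := ((h1.const_mul (R.coeff 1 + R.coeff 2 * ξ + R.coeff 3 * ξ ^ 2 : ℝ)).add
    (h2.const_mul (R.coeff 2 + R.coeff 3 * ξ : ℝ))).add (h3.const_mul (R.coeff 3 : ℝ))
  simp only [mul_zero, add_zero] at this
  refine this.congr fun k => ?_
  rw [aeval_eq_sum_range, hR]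
  simp only [Finset.sum_range_succ, Finset.sum_range_zero, zsmul_eq_mul]
  push_cast
  ring

end MarkoffGrowth

namespace MarkoffSeq

variable {ξ : ℝ} {x : ℕ → Matrix (Fin 2) (Fin 2) ℤ}

theorem entryRelations (hx : MarkoffSeq ξ x) {s : ℕ} (hs : Even s) (hs0 : 0 < s) :
    EntryRelations (fun k => x (k+s) 0 0) (fun k => x (k+s) 0 1) (fun k => x (k+s) 1 1) := by
  obtain ⟨hsym, hdet, c₁, c₂, c₃, -, -, -, hk⟩ := hx
  have hmul : ∀ k, x (k + 2 + s) = x (k + 1 + s) * Mmat (k + 1 + s) * x (k + s) := fun k => by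
    have := (hk (k+s) (by omega)).2.2.1.1
    rwa [show k + s + 2 = k + 2 + s by ring, show k + s + 1 = k + 1 + s by ring] at this
  have hM : ∀ k, Mmat (k + 1 + s) = !![3, -(-1)^k; (-1)^k, 0] := fun k => by
    rw [Mmat]
    simp only [pow_add, hs.neg_one_pow]
    norm_num
  have hs' : ∀ k, x (k+s) 1 0 = x (k+s) 0 1 := fun k => (hsym _ (by omega)).symm
  have hentry : ∀ k a b, x (k + 2 + s) a b =
      (x (k + 1 + s) a 0 * 3 + x (k + 1 + s) a 1 * (-1)^k) * x (k + s) 0 b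
        - x (k + 1 + s) a 0 * (-1)^k * x (k + s) 1 b := fun k a b => by
    simp only [hmul, hM, Matrix.mul_apply, Fin.sum_univ_two, Matrix.of_apply, Matrix.cons_val',
      Matrix.cons_val_zero, Matrix.cons_val_one, Matrix.cons_val_fin_one]
    ring
  refine ⟨fun k => ?_, fun k => ?_, fun k => ?_, fun k => ?_, fun k => ?_⟩
  · have := hdet (k+s) (by omega)
    rw [Matrix.det_fin_two, hs'] at this
    linear_combination this
  · linear_combination hentry k 0 0 - x (k + 1 + s) 0 0 * (-1)^k * hs' k
  · linear_combination hentry k 0 1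
  · linear_combination hentry k 1 0 - hs' (k+2) + (x (k + s) 0 0 * 3 - (-1)^k * x (k + s) 1 0) * hs' (k+1)
      - x (k + 1 + s) 0 1 * (-1)^k * hs' k
  · linear_combination hentry k 1 1 + (3 * x (k + s) 0 1 - (-1)^k * x (k + s) 1 1) * hs' (k+1)

theorem natCast_le_Xnorm (hx : MarkoffSeq ξ x) (k : ℕ) : (k : ℝ) ≤ Xnorm x (k+1) := by
  obtain ⟨-, -, c₁, c₂, c₃, -, -, -, hk⟩ := hx
  obtain ⟨Z, hZ⟩ : ∃ Z : ℕ → ℤ, ∀ k, Xnorm x k = Z k :=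
    ⟨fun k => max |x k 0 0| (max |x k 0 1| |x k 1 1|), fun k => by rw [Xnorm]; push_cast; rfl⟩
  induction k with
  | zero => exact_mod_cast (abs_nonneg _).trans (le_max_left _ _)
  | succ k ih =>
    have h1 := (hk (k+1) (by omega)).2.2.2.1
    rw [hZ] at ih h1 ⊢
    rw [hZ] at h1
    have h2 : (k : ℤ) ≤ Z (k+1) := by exact_mod_cast ih
    have h3 := Int.cast_lt.1 h1
    have h4 : ((k + 1 : ℕ) : ℤ) ≤ Z (k+1+1) := by omega
    exact_mod_cast h4

theorem exists_comparison (hx : MarkoffSeq ξ x) {s : ℕ} (hs0 : 0 < s) :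
    ∃ C : ℝ, 0 < C ∧ ∀ k,
      (|(x (k+s) 0 0 : ℝ) * ξ - x (k+s) 0 1| ≤ C / |(x (k+s) 0 0 : ℝ)| ∧
        |(x (k+s) 0 1 : ℝ)| ≤ C * |(x (k+s) 0 0 : ℝ)| ∧
        |(x (k+s) 1 1 : ℝ)| ≤ C * |(x (k+s) 0 0 : ℝ)|) ∧
      |(x (k+s) 0 1 : ℝ) * ξ - x (k+s) 1 1| ≤ C / |(x (k+s) 0 0 : ℝ)| := by
  obtain ⟨-, -, c₁, c₂, c₃, -, -, hc₃, hk⟩ := hx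
  refine ⟨c₃ + (1 + ξ ^ 2), by positivity, fun k => ?_⟩
  obtain ⟨-, ⟨ha, hb⟩, -, -, hX⟩ := hk (k+s) (by omega)
  have hle : |(x (k+s) 0 0 : ℝ)| ≤ Xnorm x (k+s) := le_max_left _ _
  have hle1 : |(x (k+s) 0 1 : ℝ)| ≤ Xnorm x (k+s) := (le_max_left _ _).trans (le_max_right _ _)
  have hle2 : |(x (k+s) 1 1 : ℝ)| ≤ Xnorm x (k+s) := (le_max_right _ _).trans (le_max_right _ _)
  have hpos : 0 < |(x (k+s) 0 0 : ℝ)| := by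
    by_contra hcon
    have : |(x (k+s) 0 0 : ℝ)| = 0 := le_antisymm (not_lt.1 hcon) (abs_nonneg _)
    rw [this] at hle hX
    linarith
  have hdiv : c₃ / Xnorm x (k+s) ≤ (c₃ + (1 + ξ ^ 2)) / |(x (k+s) 0 0 : ℝ)| := by
    gcongr
    nlinarith [sq_nonneg ξ]
  have hmul : Xnorm x (k+s) ≤ (c₃ + (1 + ξ ^ 2)) * |(x (k+s) 0 0 : ℝ)| := by
    nlinarith [mul_pos hc₃ hpos]
  exact ⟨⟨ha.trans hdiv, hle1.trans hmul, hle2.trans hmul⟩, hb.trans hdiv⟩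

theorem markoffGrowth (hx : MarkoffSeq ξ x) {s : ℕ} (hs : Even s) (hs0 : 0 < s) :
    MarkoffGrowth fun k => x (k+s) 0 0 := by
  have hX := hx.natCast_le_Xnorm
  have hE := hx.entryRelations hs hs0
  obtain ⟨-, -, c₁, c₂, c₃, hc₁, hc₂, hc₃, hk⟩ := hx
  have hξ : 0 < 1 + ξ ^ 2 := by positivity
  have hγ := one_lt_gold
  have hle : ∀ k, |(x k 0 0 : ℝ)| ≤ Xnorm x k := fun k => le_max_left _ _
  have hge : ∀ k, Xnorm x (k+s) < (1 + ξ ^ 2) * |(x (k+s) 0 0 : ℝ)| := fun k =>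
    (hk (k+s) (by omega)).2.2.2.2
  refine ⟨fun n h0 => ?_, hE.markoff, ?_, c₁ / (1 + ξ ^ 2), c₂ * (1 + ξ ^ 2) ^ gold, by positivity,
    by positivity, fun n => ?_⟩
  · have h1 := hge n
    have h2 := hle (n+s)
    simp only [h0, Int.cast_zero, abs_zero, mul_zero] at h1 h2
    linarith
  · refine tendsto_atTop_mono (f := fun n : ℕ => (n : ℝ) / (1 + ξ ^ 2)) (fun n => ?_)
      (tendsto_natCast_atTop_atTop.atTop_div_const hξ)
    obtain ⟨t, rfl⟩ : ∃ t, s = t + 1 := ⟨s - 1, by omega⟩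
    rw [div_le_iff₀ hξ, mul_comm]
    refine le_trans ?_ (hge n).le
    refine le_trans ?_ (hX (n+t))
    push_cast
    linarith [(Nat.cast_nonneg t : (0 : ℝ) ≤ t)]
  · obtain ⟨⟨h1, h2⟩, -⟩ := hk (n+s) (by omega)
    have h3 := hge (n+1)
    rw [show n + 1 + s = n + s + 1 by ring] at h3 ⊢
    constructor
    · rw [div_mul_eq_mul_div, div_le_iff₀ hξ, mul_comm _ (1 + ξ ^ 2)]
      refine le_trans ?_ (h1.trans h3.le)
      gcongr
      exact hle _
    · refine (hle _).trans (h2.trans ?_)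
      rw [mul_assoc, ← Real.mul_rpow hξ.le (abs_nonneg _)]
      gcongr
      · exact (abs_nonneg _).trans (hle _)
      · exact (hge n).le

theorem exists_shift (hx : MarkoffSeq ξ x) : ∃ m : ℕ, ∀ n,
    |gapSeq (fun k => x (k + 6 * (m+1)) 0 0) (n+3)| ≤
      4⁻¹ * |gapSeq (fun k => x (k + 6 * (m+1)) 0 0) n| := by
  obtain ⟨N, hN⟩ := eventually_atTop.1
    (hx.markoffGrowth (s := 6) (by decide) (by norm_num)).eventually_gapSeq_le
  refine ⟨N, fun n => ?_⟩
  have e : ∀ n, gapSeq (fun k => x (k + 6 * (N+1)) 0 0) n =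
      gapSeq (fun k => x (k + 6) 0 0) (n + 6 * N) := fun n => by
    simp only [gapSeq, show n + 6 * (N+1) = n + 6 * N + 6 by ring,
      show n + 1 + 6 * (N+1) = n + 6 * N + 1 + 6 by ring,
      show n + 3 + 6 * (N+1) = n + 6 * N + 3 + 6 by ring]
  have := hN (n + 6 * N) (by omega)
  rw [e, e, show n + 3 + 6 * N = n + 6 * N + 3 by ring]
  exact this

end MarkoffSeq

theorem Transcendental.intCast_mul_add {θ : ℝ} (hθ : Transcendental ℚ θ) {a : ℤ} (ha : a ≠ 0)
    (z : ℤ) : Transcendental ℚ (a * θ + z) := by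
  intro halg
  refine hθ ?_
  have hint : ∀ b : ℤ, IsAlgebraic ℚ (b : ℝ) := fun b => by
    simpa using isAlgebraic_algebraMap (A := ℝ) (b : ℚ)
  have ha' : (a : ℝ) ≠ 0 := Int.cast_ne_zero.2 ha
  have e : θ = (a * θ + z - z) * (a : ℝ)⁻¹ := by
    field_simp
    ring
  rw [e]
  exact (halg.sub (hint z)).mul (hint a).inv

/-- The values `u (ℓ + 6 * i) * R(ξ)` approach an integer multiple of the limit of the
approximations, modulo integers. -/
theorem EntryRelations.tendsto_distInt {u v w : ℕ → ℤ} {ξ : ℝ} (h : EntryRelations u v w)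
    (hg : MarkoffGrowth u) (hq : ∀ n, |gapSeq u (n+3)| ≤ 4⁻¹ * |gapSeq u n|) {C : ℝ} (hC : 0 < C)
    (happ : ∀ k, (|(u k : ℝ) * ξ - v k| ≤ C / |(u k : ℝ)| ∧ |(v k : ℝ)| ≤ C * |(u k : ℝ)| ∧
      |(w k : ℝ)| ≤ C * |(u k : ℝ)|) ∧ |(v k : ℝ) * ξ - w k| ≤ C / |(u k : ℝ)|)
    {R : ℤ[X]} (hR : R.natDegree = 3) (ℓ : ℕ) :
    Tendsto (fun i : ℕ => distInt (u (ℓ + 6 * i) * aeval ξ R)) atTop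
      (𝓝 (distInt (((R.coeff 3 * (-1) ^ ℓ : ℤ) : ℝ) * (signedApprox u v w ℓ + tailSum u (ℓ + 2))))) := by
  obtain ⟨z, hz⟩ := hg.exists_tendsto_mul_aeval hC (fun k => (happ k).1) (fun k => (happ k).2) hR
  choose y hy using h.exists_eq_signedApprox_add_tailSum hg.ne_zero hq ℓ
  set θ := signedApprox u v w ℓ + tailSum u (ℓ + 2) with hθ
  have hν : Tendsto (fun i : ℕ => ℓ + 6 * i) atTop atTop :=
    tendsto_atTop_mono (fun i => show i ≤ ℓ + 6 * i by omega) tendsto_id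
  have hν' : Tendsto (fun i : ℕ => ℓ + 2 + 6 * i) atTop atTop :=
    tendsto_atTop_mono (fun i => show i ≤ ℓ + 2 + 6 * i by omega) tendsto_id
  have htail := (hg.tendsto_zero_of_le_gap (abs_tailSum_le hq)).comp hν'
  have hlim := (((hz.comp hν).sub (htail.const_mul ((R.coeff 3 * (-1) ^ ℓ : ℤ) : ℝ))).add_const
    (((R.coeff 3 * (-1) ^ ℓ : ℤ) : ℝ) * θ))
  simp only [mul_zero, sub_zero, zero_add] at hlim
  refine ((continuous_distInt.tendsto _).comp hlim).congr fun i => ?_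
  have hs : ((-1 : ℝ) ^ ℓ) ^ 2 = 1 := by rw [← pow_mul, mul_comm, pow_mul]; norm_num
  have hyi := hy (2 * i)
  rw [signedApprox, show ℓ + 3 * (2 * i) = ℓ + 6 * i by ring,
    show ℓ + 2 + 3 * (2 * i) = ℓ + 2 + 6 * i by ring,
    show ((-1 : ℝ)) ^ (ℓ + 6 * i) = (-1) ^ ℓ by rw [pow_add, pow_mul]; norm_num] at hyi
  rw [← distInt_intCast_add (R.coeff 3 * (-1) ^ ℓ * y (2 * i) - z (ℓ + 6 * i))]
  simp only [Function.comp_apply]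
  congr 1
  push_cast
  linear_combination (R.coeff 3 : ℝ) * (-1) ^ ℓ * hyi +
    R.coeff 3 * ((numer u v w (ℓ + 6 * i) : ℝ) / u (ℓ + 6 * i + 2)) * hs

theorem stmt13 (ξ : ℝ) (x : ℕ → Matrix (Fin 2) (Fin 2) ℤ) (hx : MarkoffSeq ξ x)
    (ℓ : ℕ) (hℓ : ℓ ∈ ({1, 2, 3} : Set ℕ)) (R : Polynomial ℤ) (hR : R.natDegree = 3) :
    ∃ δ : ℝ,
      Tendsto (fun i : ℕ =>
        distInt ((x (ℓ+6*i) 0 0 : ℝ) * Polynomial.aeval ξ R)) atTop (nhds δ) ∧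
      Transcendental ℚ δ ∧
      (∃ c₄ : ℝ, 0 < c₄ ∧
        {α : ℚ | |δ - (α : ℝ)| ≤ c₄ * ratHeight α ^ (-gold - 2)}.Infinite) ∧
      (∃ c₅ : ℝ, 0 < c₅ ∧
        ∀ α : ℚ, ¬ (|δ - (α : ℝ)| ≤ c₅ * ratHeight α ^ (-gold - 2))) := by
  obtain ⟨m, hq⟩ := hx.exists_shift
  have hs : Even (6 * (m+1)) := (by decide : Even 6).mul_right _
  have hs0 : 0 < 6 * (m+1) := by omega
  have hE := hx.entryRelations hs hs0
  have hg := hx.markoffGrowth hs hs0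
  obtain ⟨C, hC, happ⟩ := hx.exists_comparison hs0
  have hlim := hE.tendsto_distInt hg hq hC happ hR ℓ
  have happrox := hE.exists_eq_div_add_tailSum hg.ne_zero hq ℓ
  set u : ℕ → ℤ := fun k => x (k + 6 * (m+1)) 0 0
  set θ := EntryRelations.signedApprox u (fun k => x (k + 6 * (m+1)) 0 1)
    (fun k => x (k + 6 * (m+1)) 1 1) ℓ + tailSum u (ℓ + 2)
  have htail0 : ∀ n, tailSum u n ≠ 0 := fun n => abs_pos.1
    ((mul_pos (by norm_num) (abs_pos.2 (hg.gapSeq_ne_zero n))).trans_le (le_abs_tailSum hq n))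
  have hθ : Transcendental ℚ θ :=
    hg.transcendental_of_approx (tailSum_eq hq) htail0 (abs_tailSum_le hq) happrox
  obtain ⟨ε, y, hε, hδ⟩ := exists_distInt_eq (((R.coeff 3 * (-1) ^ ℓ : ℤ) : ℝ) * θ)
  have hcoeff : R.coeff 3 ≠ 0 := by
    rw [← hR]
    refine leadingCoeff_ne_zero.2 fun h0 => ?_
    rw [h0, natDegree_zero] at hR
    omega
  obtain ⟨a, ha⟩ : ∃ a : ℤ, a = ε * (R.coeff 3 * (-1) ^ ℓ) := ⟨_, rfl⟩
  have ha0 : a ≠ 0 := by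
    rw [ha]
    exact mul_ne_zero hε (mul_ne_zero hcoeff (pow_ne_zero _ (by norm_num)))
  have hδ' : distInt (((R.coeff 3 * (-1) ^ ℓ : ℤ) : ℝ) * θ) = a * θ + y := by
    rw [hδ, ha]
    push_cast
    ring
  rw [hδ'] at hlim
  have htr := hθ.intCast_mul_add ha0 y
  have happrox' : ∀ i, ∃ p : ℤ, a * θ + y =
      p / u (ℓ + 2 + 3 * i) + a * tailSum u (ℓ + 2 + 3 * i) := fun i => by
    obtain ⟨p, hp⟩ : ∃ p : ℤ, θ = p / u (ℓ + 2 + 3 * i) + tailSum u (ℓ + 2 + 3 * i) := happrox i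
    refine ⟨a * p + y * u (ℓ + 2 + 3 * i), ?_⟩
    have hne := hg.cast_ne (ℓ + 2 + 3 * i)
    rw [hp]
    push_cast
    field_simp
    ring
  have haabs : 0 < |(a : ℝ)| := abs_pos.2 (Int.cast_ne_zero.2 ha0)
  obtain ⟨b, B, hb, hB, hbB⟩ := hg.exists_gapSeq_bounds
  obtain ⟨D, hD, hgap⟩ := hg.exists_abs_gapSeq_le
  refine ⟨a * θ + y, ?_, htr, ?_, ?_⟩
  · rw [← tendsto_add_atTop_iff_nat (m+1)]
    refine hlim.congr fun i => ?_
    rw [show ℓ + 6 * i + 6 * (m+1) = ℓ + 6 * (i + (m+1)) by ring]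
  · refine hg.exists_infinite_approx (F := fun n => a * tailSum u n) (C := |(a : ℝ)| * (8 * B))
      (by positivity) (fun n => ?_) htr.irrational happrox'
    rw [abs_mul, mul_assoc, mul_assoc]
    gcongr
    exact (abs_tailSum_le hq n).trans (mul_le_mul_of_nonneg_left (hbB n).2 (by norm_num))
  · refine hg.exists_lower_approx hE.dvd_of_dvd_succ ha0 (F := fun n => a * tailSum u n)
      (fun n => ?_) (c := |(a : ℝ)| * (4 * b)) (C₁ := |(a : ℝ)| * (8 * D)) (by positivity)
      (by positivity) (fun n => ?_) (fun n => ?_) happrox'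
    · simp only [tailSum_eq hq n]
      ring
    · rw [abs_mul, mul_assoc, mul_assoc]
      gcongr
      exact (mul_le_mul_of_nonneg_left (hbB n).1 (by norm_num)).trans (le_abs_tailSum hq n)
    · rw [abs_mul, mul_div_assoc, mul_div_assoc]
      gcongr
      exact (abs_tailSum_le hq n).trans (mul_le_mul_of_nonneg_left (hgap n) (by norm_num))
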